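/- arXiv:2106.01281 — 4 statements merged into one kernel-verified Lean document; each statement's English description precedes it below -/
import Mathlib

section
/- Let μ be a law-invariant JP capacity represented by a pair (ν, α) with α ≠ 1/2, and let E_μ denote the associated Choquet integral on L^∞. Then the following are equivalent: (i) E_μ[X] = E[X] for all X ∈ L^∞ (the expectation under P); (ii) there exist a ∈ ℝ and a nonconstant Z ∈ L^∞ such that E_μ[X + tZ] = E_μ[X] + a t for all X ∈ L^∞ and t ∈ ℝ; (iii) there exist a ∈ ℝ and a nonconstant Z ∈ L^∞ such that E_μ[tZ] = a t for all t ∈ ℝ; (iv) there exists a nonconstant Z ∈ L^∞ such that E_μ[−Z] = −E_μ[Z]. -/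
/-!
The substantial implication is that oddness of `E_μ` at one nonconstant `Z` forces `E_μ` to be the
expectation.

* The relations `μ = αν + (1 - α)ν̄` at `A` and `Aᶜ` can be solved for `ν` because `α ≠ 1/2`, so `ν`
  is law invariant as well (`lawInvariant_of_JPRep`).
* `E_μ[Z] + E_μ[-Z]` equals `(2α - 1) ∫ (ν(Z > u) + ν(Z ≤ u) - 1) du`, with a nonnegative integrand
  since `ν` is an upper envelope of probability measures. If the sum is zero, the integrand vanishes
  for almost every `u`; as `Z` is nonconstant, some such `u` yields an event `A` with `0 < P A < 1`
  and `ν A + ν Aᶜ = 1` (`exists_additive_event`).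
* By law invariance, each measure `q` of the envelope then takes the value `ν A` on every event of
  probability `P A`. Since `q ≪ P` and `P` is atomless, comparing events that differ only by
  exchanging a part where `dq/dP < 1` for an equally likely part where `dq/dP > 1` gives `q = P`
  (`eq_of_const_on_level`, based on Sierpiński's theorem `exists_subset_measureReal_eq`).
* Hence `ν = P`, so `μ = P` on events, and the layer cake formula identifies `E_μ` with the
  expectation (`choquet_eq_integral`).
-/

open MeasureTheory Set List
open scoped ENNReal NNReal

noncomputable section

namespace Collapse

variable {Ω : Type*} [MeasurableSpace Ω]

/-- A measure is atomless (nonatomic) if every set of positive measure contains a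
measurable subset of strictly smaller positive measure. -/
def IsAtomless (P : Measure Ω) : Prop :=
  ∀ A : Set Ω, MeasurableSet A → 0 < P A →
    ∃ B : Set Ω, MeasurableSet B ∧ B ⊆ A ∧ 0 < P B ∧ P B < P A

/-- `X` and `Y` have the same law under `P`. -/
def SameLaw (P : Measure Ω) (X Y : Ω → ℝ) : Prop :=
  Measure.map X P = Measure.map Y P

/-- `X` is not `P`-a.s. equal to a constant. -/
def Nonconstant (P : Measure Ω) (X : Ω → ℝ) : Prop :=
  ∀ c : ℝ, ¬ X =ᵐ[P] (fun _ => c)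

/-- `X` and `Y` are comonotone:
`P(X ≤ x, Y ≤ y) = min (P(X ≤ x)) (P(Y ≤ y))` for all `x y`. -/
def Comonotone (P : Measure Ω) (X Y : Ω → ℝ) : Prop :=
  ∀ x y : ℝ,
    P ({ω | X ω ≤ x} ∩ {ω | Y ω ≤ y}) = min (P {ω | X ω ≤ x}) (P {ω | Y ω ≤ y})

/-- `X` and `Y` are antimonotone:
`P(X ≤ x, Y ≤ y) = max (P(X ≤ x) + P(Y ≤ y) - 1) 0` for all `x y`
(in `ℝ≥0∞`, truncated subtraction realises the `max` with `0`). -/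
def Antimonotone (P : Measure Ω) (X Y : Ω → ℝ) : Prop :=
  ∀ x y : ℝ,
    P ({ω | X ω ≤ x} ∩ {ω | Y ω ≤ y}) = (P {ω | X ω ≤ x} + P {ω | Y ω ≤ y}) - 1

/-- `q` is a quantile function of `X` under `P`. -/
def IsQuantile (P : Measure Ω) (X : Ω → ℝ) (q : ℝ → ℝ) : Prop :=
  ∀ s ∈ Set.Ioo (0:ℝ) 1,
    sInf {x : ℝ | s ≤ (P {ω | X ω ≤ x}).toReal} ≤ q s ∧
    q s ≤ sInf {x : ℝ | s < (P {ω | X ω ≤ x}).toReal}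

/-- `X` belongs to `L^∞(P)`: measurable and essentially bounded. -/
def MemLinf (P : Measure Ω) (X : Ω → ℝ) : Prop :=
  Measurable X ∧ ∃ M : ℝ, ∀ᵐ ω ∂P, |X ω| ≤ M

/-- A pair `(𝒳, 𝒳*)` of law-invariant vector subspaces of `L¹(P)` containing `L^∞(P)`
such that `X * Y ∈ L¹(P)` for all `X ∈ 𝒳`, `Y ∈ 𝒳*` (Assumption 2.1). -/
structure PairedSpaces (P : Measure Ω) where
  carrier : Set (Ω → ℝ)
  dual : Set (Ω → ℝ)
  meas_carrier : ∀ X ∈ carrier, Measurable X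
  meas_dual : ∀ Y ∈ dual, Measurable Y
  int_carrier : ∀ X ∈ carrier, Integrable X P
  int_dual : ∀ Y ∈ dual, Integrable Y P
  smul_carrier : ∀ X ∈ carrier, ∀ c : ℝ, (fun ω => c * X ω) ∈ carrier
  add_carrier : ∀ X ∈ carrier, ∀ X' ∈ carrier, (fun ω => X ω + X' ω) ∈ carrier
  smul_dual : ∀ Y ∈ dual, ∀ c : ℝ, (fun ω => c * Y ω) ∈ dual
  add_dual : ∀ Y ∈ dual, ∀ Y' ∈ dual, (fun ω => Y ω + Y' ω) ∈ dual
  linf_carrier : ∀ X : Ω → ℝ, MemLinf P X → X ∈ carrier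
  linf_dual : ∀ Y : Ω → ℝ, MemLinf P Y → Y ∈ dual
  lawinv_carrier : ∀ X ∈ carrier, ∀ X' : Ω → ℝ, Measurable X' → SameLaw P X' X → X' ∈ carrier
  lawinv_dual : ∀ Y ∈ dual, ∀ Y' : Ω → ℝ, Measurable Y' → SameLaw P Y' Y → Y' ∈ dual
  mul_int : ∀ X ∈ carrier, ∀ Y ∈ dual, Integrable (fun ω => X ω * Y ω) P

/-- A subset `C` of `𝒳` is closed in the weak topology `σ(𝒳, 𝒳*)`, i.e. the topology
on `𝒳` induced by the linear functionals `X ↦ E[X Y]`, `Y ∈ 𝒳*`. -/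
def WeakClosed (P : Measure Ω) (pr : PairedSpaces P) (C : Set (Ω → ℝ)) : Prop :=
  @IsClosed ↥pr.carrier
    (TopologicalSpace.induced
      (fun X : ↥pr.carrier => (fun Y : ↥pr.dual => ∫ ω, (X : Ω → ℝ) ω * (Y : Ω → ℝ) ω ∂P))
      Pi.topologicalSpace)
    {X : ↥pr.carrier | (X : Ω → ℝ) ∈ C}

/-- `φ` is `σ(𝒳, 𝒳*)`-lower semicontinuous: every sublevel set is `σ(𝒳, 𝒳*)`-closed. -/
def WeakLSC (P : Measure Ω) (pr : PairedSpaces P) (φ : (Ω → ℝ) → EReal) : Prop :=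
  ∀ m : ℝ, WeakClosed P pr {X | X ∈ pr.carrier ∧ φ X ≤ (m : EReal)}

/-- The (upper) support functional `σ_C(Y) = sup_{X ∈ C} E[XY]`. -/
def suppFn (P : Measure Ω) (C : Set (Ω → ℝ)) (Y : Ω → ℝ) : EReal :=
  ⨆ X ∈ C, ((∫ ω, X ω * Y ω ∂P : ℝ) : EReal)

/-- The conjugate functional `φ*(Y) = sup_{X ∈ 𝒳} (E[XY] - φ(X))`. -/
def conj (P : Measure Ω) (𝒳 : Set (Ω → ℝ)) (φ : (Ω → ℝ) → EReal) (Y : Ω → ℝ) : EReal :=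
  ⨆ X ∈ 𝒳, (((∫ ω, X ω * Y ω ∂P : ℝ) : EReal) - φ X)

/-- The recession cone `C^∞ = {X ∈ 𝒳 : {X} + C ⊆ C}`. -/
def recCone (𝒳 C : Set (Ω → ℝ)) : Set (Ω → ℝ) :=
  {X | X ∈ 𝒳 ∧ ∀ U ∈ C, (fun ω => X ω + U ω) ∈ C}

/-- A functional on `𝒳` is law invariant. -/
def LawInvariantFn (P : Measure Ω) (𝒳 : Set (Ω → ℝ)) (φ : (Ω → ℝ) → EReal) : Prop :=
  ∀ X ∈ 𝒳, ∀ Y ∈ 𝒳, SameLaw P X Y → φ X = φ Y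

/-- A set of random variables is law invariant. -/
def LawInvariantSet (P : Measure Ω) (C : Set (Ω → ℝ)) : Prop :=
  ∀ X ∈ C, ∀ Y : Ω → ℝ, Measurable Y → SameLaw P Y X → Y ∈ C

/-- A functional on `𝒳` is expectation invariant. -/
def ExpectationInvariantFn (P : Measure Ω) (𝒳 : Set (Ω → ℝ)) (φ : (Ω → ℝ) → EReal) : Prop :=
  ∀ X ∈ 𝒳, ∀ Y ∈ 𝒳, (∫ ω, X ω ∂P) = (∫ ω, Y ω ∂P) → φ X = φ Y

/-- Convexity of a functional `φ : 𝒳 → (-∞, ∞]`. -/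
def ConvexFn (𝒳 : Set (Ω → ℝ)) (φ : (Ω → ℝ) → EReal) : Prop :=
  ∀ X ∈ 𝒳, ∀ Y ∈ 𝒳, ∀ l : ℝ, l ∈ Set.Icc (0:ℝ) 1 →
    φ (fun ω => l * X ω + (1 - l) * Y ω) ≤ (l : EReal) * φ X + ((1 - l : ℝ) : EReal) * φ Y

/-- Quasiconvexity of a functional `φ : 𝒳 → (-∞, ∞]`. -/
def QuasiconvexFn (𝒳 : Set (Ω → ℝ)) (φ : (Ω → ℝ) → EReal) : Prop :=
  ∀ X ∈ 𝒳, ∀ Y ∈ 𝒳, ∀ l : ℝ, l ∈ Set.Icc (0:ℝ) 1 →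
    φ (fun ω => l * X ω + (1 - l) * Y ω) ≤ max (φ X) (φ Y)

/-- Convexity of a set of random variables. -/
def ConvexSet (C : Set (Ω → ℝ)) : Prop :=
  ∀ X ∈ C, ∀ Y ∈ C, ∀ l : ℝ, l ∈ Set.Icc (0:ℝ) 1 →
    (fun ω => l * X ω + (1 - l) * Y ω) ∈ C

/-- The expectation of `Z` as an extended real number,
`E[Z] = ∫ Z⁺ dP - ∫ Z⁻ dP` computed in `EReal`. -/
def eExp (P : Measure Ω) (Z : Ω → ℝ) : EReal :=
  ((∫⁻ ω, ENNReal.ofReal (Z ω) ∂P : ℝ≥0∞) : EReal) -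
    ((∫⁻ ω, ENNReal.ofReal (-(Z ω)) ∂P : ℝ≥0∞) : EReal)

/-- `X` dominates `Y` in the increasing convex (second-order stochastic dominance) sense:
`E[f(X)] ≥ E[f(Y)]` for every nondecreasing convex `f : ℝ → ℝ`. -/
def SSDdom (P : Measure Ω) (X Y : Ω → ℝ) : Prop :=
  ∀ f : ℝ → ℝ, Monotone f → ConvexOn ℝ Set.univ f →
    eExp P (fun ω => f (Y ω)) ≤ eExp P (fun ω => f (X ω))

/-- A consistent risk measure on `𝒳`: a proper, cash-additive, normalised functional
that is consistent with second-order stochastic dominance. -/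
def IsConsistentRM (P : Measure Ω) (𝒳 : Set (Ω → ℝ)) (φ : (Ω → ℝ) → EReal) : Prop :=
  (∀ X ∈ 𝒳, φ X ≠ (⊥ : EReal)) ∧
  (∃ X ∈ 𝒳, φ X ≠ (⊤ : EReal)) ∧
  (∀ X ∈ 𝒳, ∀ m : ℝ, φ (fun ω => X ω + m) = φ X + (m : EReal)) ∧
  (∀ X ∈ 𝒳, ∀ Y ∈ 𝒳, SSDdom P X Y → φ Y ≤ φ X) ∧
  φ (fun _ => (0:ℝ)) = (0 : EReal)

/-- A capacity on `(Ω, F)`. -/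
structure Capacity (Ω : Type*) [MeasurableSpace Ω] where
  toFun : Set Ω → ℝ
  empty' : toFun ∅ = 0
  univ' : toFun Set.univ = 1
  mono' : ∀ ⦃A B : Set Ω⦄, MeasurableSet A → MeasurableSet B → A ⊆ B → toFun A ≤ toFun B
  nonneg' : ∀ A : Set Ω, MeasurableSet A → 0 ≤ toFun A
  le_one' : ∀ A : Set Ω, MeasurableSet A → toFun A ≤ 1

/-- A capacity is coherent if it is the upper envelope of a family of probability measures. -/
def Capacity.Coherent (ν : Capacity Ω) : Prop :=
  ∃ Q : Set (Measure Ω), Q.Nonempty ∧ (∀ m ∈ Q, IsProbabilityMeasure m) ∧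
    ∀ A : Set Ω, MeasurableSet A → ν.toFun A = ⨆ m ∈ Q, (m A).toReal

/-- A capacity is law invariant (with respect to `P`). -/
def Capacity.LawInvariant (P : Measure Ω) (μ : Capacity Ω) : Prop :=
  ∀ A B : Set Ω, MeasurableSet A → MeasurableSet B → P A = P B → μ.toFun A = μ.toFun B

/-- `μ` is the Jaffray-Philippe capacity represented by the pair `(ν, α)`:
`μ = α ν + (1 - α) ν̄` with `ν` coherent and `α ∈ [0,1]`,
where `ν̄(A) = 1 - ν(Aᶜ)` is the dual capacity. -/
def IsJPRep (μ ν : Capacity Ω) (α : ℝ) : Prop :=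
  ν.Coherent ∧ α ∈ Set.Icc (0:ℝ) 1 ∧
    ∀ A : Set Ω, MeasurableSet A → μ.toFun A = α * ν.toFun A + (1 - α) * (1 - ν.toFun Aᶜ)

/-- The Choquet integral `E_μ[X] = ∫_{-∞}^0 (μ(X > s) - 1) ds + ∫_0^∞ μ(X > s) ds`. -/
def choquet (μ : Capacity Ω) (X : Ω → ℝ) : ℝ :=
  (∫ s in Set.Iio (0:ℝ), (μ.toFun {ω | s < X ω} - 1)) +
    ∫ s in Set.Ici (0:ℝ), μ.toFun {ω | s < X ω}

/-- `X` is an optimal solution of: maximise `φ` over `C` subject to `E[D X] = p`. -/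
def IsOptimal (P : Measure Ω) (φ : (Ω → ℝ) → EReal) (C : Set (Ω → ℝ)) (D : Ω → ℝ)
    (p : ℝ) (X : Ω → ℝ) : Prop :=
  X ∈ C ∧ (∫ ω, D ω * X ω ∂P) = p ∧
    ∀ X' ∈ C, (∫ ω, D ω * X' ω ∂P) = p → φ X' ≤ φ X

/-- A set of random variables is increasing. -/
def IncreasingSet (C : Set (Ω → ℝ)) : Prop :=
  ∀ X ∈ C, ∀ m : ℝ, 0 ≤ m → (fun ω => X ω + m) ∈ C

/-- `φ` is weakly increasing: `φ(X + m) ≥ φ(X)` for `m ≥ 0`. -/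
def WeaklyIncreasingFn (𝒳 : Set (Ω → ℝ)) (φ : (Ω → ℝ) → EReal) : Prop :=
  ∀ X ∈ 𝒳, ∀ m : ℝ, 0 ≤ m → φ X ≤ φ (fun ω => X ω + m)

/-- `φ` is increasing: `φ(X + m) > φ(X)` whenever `φ(X) ∈ ℝ` and `m > 0`. -/
def IncreasingFn (𝒳 : Set (Ω → ℝ)) (φ : (Ω → ℝ) → EReal) : Prop :=
  ∀ X ∈ 𝒳, (φ X ≠ (⊤ : EReal) ∧ φ X ≠ (⊥ : EReal)) → ∀ m : ℝ, 0 < m →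
    φ X < φ (fun ω => X ω + m)


/-! ### Atomless measures -/

lemma exists_small_subset {P : Measure Ω} [IsProbabilityMeasure P] (hP : IsAtomless P)
    {A : Set Ω} (hA : MeasurableSet A) (hpos : 0 < P.real A) {ε : ℝ} (hε : 0 < ε) :
    ∃ B, MeasurableSet B ∧ B ⊆ A ∧ 0 < P.real B ∧ P.real B ≤ ε := by
  have step : ∀ n : ℕ, ∃ B, MeasurableSet B ∧ B ⊆ A ∧ 0 < P.real B ∧
      P.real B ≤ P.real A * (1 / 2) ^ n := by
    intro n
    induction n with
    | zero => exact ⟨A, hA, subset_rfl, hpos, by simp⟩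
    | succ n ih =>
      obtain ⟨B, hB, hBA, hB0, hBn⟩ := ih
      obtain ⟨C, hC, hCB, hC0, hCB'⟩ := hP B hB (by
        rw [measureReal_def, ENNReal.toReal_pos_iff] at hB0; exact hB0.1)
      have hC0' : 0 < P.real C := ENNReal.toReal_pos hC0.ne' (measure_ne_top _ _)
      have hlt : P.real C < P.real B :=
        (ENNReal.toReal_lt_toReal (measure_ne_top _ _) (measure_ne_top _ _)).2 hCB'
      have hdiff : P.real (B \ C) = P.real B - P.real C := measureReal_sdiff hCB hC
      rw [pow_succ]
      by_cases h : P.real C ≤ P.real B / 2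
      · exact ⟨C, hC, hCB.trans hBA, hC0', by linarith⟩
      · exact ⟨B \ C, hB.diff hC, sdiff_subset.trans hBA, by linarith, by linarith⟩
  obtain ⟨n, hn⟩ := exists_pow_lt_of_lt_one hε (by norm_num : (1 / 2 : ℝ) < 1)
  obtain ⟨B, hB, hBA, hB0, hBn⟩ := step n
  refine ⟨B, hB, hBA, hB0, hBn.trans ?_⟩
  have : P.real A ≤ 1 := measureReal_le_one
  have h2 : (0:ℝ) ≤ (1 / 2) ^ n := by positivity
  nlinarith

/-- Sierpiński's theorem: an atomless probability measure takes, on the measurable subsets of `A`,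
every value between `0` and `P A`. The set is the union of a greedy increasing sequence, each step
of which adds at least half of the largest mass that can still be added. -/
lemma exists_subset_measureReal_eq {P : Measure Ω} [IsProbabilityMeasure P] (hP : IsAtomless P)
    {A : Set Ω} (hA : MeasurableSet A) {r : ℝ} (hr0 : 0 ≤ r) (hr : r ≤ P.real A) :
    ∃ B, MeasurableSet B ∧ B ⊆ A ∧ P.real B = r := by
  let S := {B : Set Ω // MeasurableSet B ∧ B ⊆ A ∧ P.real B ≤ r}
  have hstep : ∀ B : S, ∃ B' : S, B.1 ⊆ B'.1 ∧ ∀ C, MeasurableSet C → C ⊆ A \ B.1 →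
      P.real B.1 + P.real C ≤ r → P.real C ≤ 2 * (P.real B'.1 - P.real B.1) := by
    rintro ⟨B, hB, hBA, hBr⟩
    let T : Set ℝ := {x | ∃ C, MeasurableSet C ∧ C ⊆ A \ B ∧ P.real B + P.real C ≤ r ∧
      P.real C = x}
    have hTb : BddAbove T := ⟨1, by
      rintro x ⟨C, -, -, -, rfl⟩; exact measureReal_le_one⟩
    have hT0 : (0:ℝ) ∈ T := ⟨∅, MeasurableSet.empty, empty_subset _, by simpa using hBr, by simp⟩
    by_cases hs : 0 < sSup T
    · obtain ⟨x, ⟨C, hC, hCA, hCr, rfl⟩, hx⟩ :=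
        exists_lt_of_lt_csSup ⟨0, hT0⟩ (by linarith : sSup T / 2 < sSup T)
      have hu : P.real (B ∪ C) = P.real B + P.real C :=
        measureReal_union (disjoint_left.2 fun ω h h' => (hCA h').2 h) hC
      refine ⟨⟨B ∪ C, hB.union hC, union_subset hBA (hCA.trans sdiff_subset), hu ▸ hCr⟩,
        subset_union_left, fun D hD hDA hDr => ?_⟩
      have : P.real D ≤ sSup T := le_csSup hTb ⟨D, hD, hDA, hDr, rfl⟩
      simp only [hu]
      linarith
    · refine ⟨⟨B, hB, hBA, hBr⟩, subset_rfl, fun D hD hDA hDr => ?_⟩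
      have : P.real D ≤ sSup T := le_csSup hTb ⟨D, hD, hDA, hDr, rfl⟩
      simp only [sub_self, mul_zero]
      linarith
  choose next hsub hnext using hstep
  let B : ℕ → S := fun n => Nat.rec ⟨∅, MeasurableSet.empty, empty_subset _, by simpa⟩
    (fun _ b => next b) n
  have hBs : ∀ n, B (n + 1) = next (B n) := fun n => rfl
  have hmono : Monotone fun n => (B n).1 :=
    monotone_nat_of_le_succ fun n => by rw [hBs]; exact hsub _
  have hlim : Filter.Tendsto (fun n => P.real (B n).1) Filter.atTop
      (nhds (P.real (⋃ n, (B n).1))) :=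
    (ENNReal.tendsto_toReal (measure_ne_top _ _)).comp (tendsto_measure_iUnion_atTop hmono)
  have hle : P.real (⋃ n, (B n).1) ≤ r := le_of_tendsto' hlim fun n => (B n).2.2.2
  have hUm : MeasurableSet (⋃ n, (B n).1) := MeasurableSet.iUnion fun n => (B n).2.1
  have hUA : (⋃ n, (B n).1) ⊆ A := iUnion_subset fun n => (B n).2.2.1
  refine ⟨⋃ n, (B n).1, hUm, hUA, le_antisymm hle ?_⟩
  by_contra! hlt
  have hd : P.real (A \ ⋃ n, (B n).1) = P.real A - P.real (⋃ n, (B n).1) :=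
    measureReal_sdiff hUA hUm
  obtain ⟨C, hC, hCA, hC0, hCr⟩ := exists_small_subset hP (hA.diff hUm)
    (by rw [hd]; linarith) (sub_pos.2 hlt)
  have hbound : ∀ n, P.real C ≤ 2 * (P.real (B (n + 1)).1 - P.real (B n).1) := by
    intro n
    rw [hBs]
    refine hnext (B n) C hC (fun ω h => ⟨(hCA h).1, fun h' => (hCA h).2 (mem_iUnion.2 ⟨n, h'⟩)⟩) ?_
    have : P.real (B n).1 ≤ P.real (⋃ n, (B n).1) := measureReal_mono (subset_iUnion (fun n => (B n).1) n)
    linarith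
  have hl0 := ((hlim.comp (Filter.tendsto_add_atTop_nat 1)).sub hlim).const_mul 2
  have := ge_of_tendsto' hl0 hbound
  linarith

/-- If `q ≪ P` takes one and the same value on all events of `P`-probability `p ∈ (0, 1)`, then
`q = P`. Otherwise the density of `q` is `< 1` on a set `C` and `> 1` on a set `C'` of equal small
`P`-probability; adding a common disjoint set `D` completes both to events of probability `p`. -/
lemma eq_of_const_on_level {P q : Measure Ω} [IsProbabilityMeasure P] [IsProbabilityMeasure q]
    (hP : IsAtomless P) (hq : q ≪ P) {p c : ℝ} (hp0 : 0 < p) (hp1 : p < 1)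
    (hc : ∀ B, MeasurableSet B → P.real B = p → q.real B = c) : q = P := by
  set f := q.rnDeriv P with hf
  have hfm : Measurable f := Measure.measurable_rnDeriv q P
  have hqf : P.withDensity f = q := Measure.withDensity_rnDeriv_eq q P hq
  have hq_apply : ∀ C, MeasurableSet C → q C = ∫⁻ ω in C, f ω ∂P := fun C hC => by
    rw [← withDensity_apply f hC, hqf]
  have hint : ∫⁻ ω, f ω ∂P = 1 := by
    rw [← setLIntegral_univ, ← hq_apply _ MeasurableSet.univ, measure_univ]
  have hone : ∫⁻ _, (1 : ℝ≥0∞) ∂P = 1 := by simp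
  have hA1 : MeasurableSet {ω | f ω < 1} := measurableSet_lt hfm measurable_const
  have hA2 : MeasurableSet {ω | 1 < f ω} := measurableSet_lt measurable_const hfm
  suffices h : f =ᵐ[P] fun _ => 1 by
    rw [← hqf, withDensity_congr_ae h]; exact withDensity_one
  by_cases h1 : P.real {ω | f ω < 1} = 0
  · have : ∀ᵐ ω ∂P, 1 ≤ f ω := by
      rw [measureReal_eq_zero_iff] at h1
      simpa [ae_iff] using h1
    exact (ae_eq_of_ae_le_of_lintegral_le (f := fun _ => 1) this (by simp) hfm.aemeasurable
      (by rw [hint, hone])).symm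
  by_cases h2 : P.real {ω | 1 < f ω} = 0
  · have : ∀ᵐ ω ∂P, f ω ≤ 1 := by
      rw [measureReal_eq_zero_iff] at h2
      simpa [ae_iff] using h2
    exact ae_eq_of_ae_le_of_lintegral_le this (by rw [hint]; simp) aemeasurable_const
      (by rw [hint, hone])
  exfalso
  have h1' : 0 < P.real {ω | f ω < 1} := lt_of_le_of_ne measureReal_nonneg (Ne.symm h1)
  have h2' : 0 < P.real {ω | 1 < f ω} := lt_of_le_of_ne measureReal_nonneg (Ne.symm h2)
  obtain ⟨r, hr0, hr⟩ : ∃ r, 0 < r ∧ r ≤ P.real {ω | f ω < 1} ∧ r ≤ P.real {ω | 1 < f ω} ∧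
      r ≤ p ∧ r ≤ 1 - p :=
    ⟨min (min (P.real {ω | f ω < 1}) (P.real {ω | 1 < f ω})) (min p (1 - p)),
      lt_min (lt_min h1' h2') (lt_min hp0 (by linarith)),
      (min_le_left _ _).trans (min_le_left _ _), (min_le_left _ _).trans (min_le_right _ _),
      (min_le_right _ _).trans (min_le_left _ _), (min_le_right _ _).trans (min_le_right _ _)⟩
  obtain ⟨hr1, hr2, hrp, hrp'⟩ := hr
  obtain ⟨C, hC, hCA, hCr⟩ := exists_subset_measureReal_eq hP hA1 hr0.le hr1
  obtain ⟨C', hC', hCA', hCr'⟩ := exists_subset_measureReal_eq hP hA2 hr0.le hr2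
  have hdisj : Disjoint C C' :=
    disjoint_left.2 fun ω h h' => lt_asymm (show f ω < 1 from hCA h) (hCA' h')
  have hcompl : P.real (C ∪ C')ᶜ = 1 - 2 * r := by
    rw [probReal_compl_eq_one_sub (hC.union hC'), measureReal_union hdisj hC']; linarith
  obtain ⟨D, hD, hDA, hDr⟩ := exists_subset_measureReal_eq hP (hC.union hC').compl
    (r := p - r) (by linarith) (by linarith)
  have hCD : Disjoint C D := disjoint_left.2 fun ω h h' => hDA h' (Or.inl h)
  have hCD' : Disjoint C' D := disjoint_left.2 fun ω h h' => hDA h' (Or.inr h)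
  have e1 := hc (C ∪ D) (hC.union hD) (by rw [measureReal_union hCD hD]; linarith)
  have e2 := hc (C' ∪ D) (hC'.union hD) (by rw [measureReal_union hCD' hD]; linarith)
  rw [measureReal_union hCD hD] at e1
  rw [measureReal_union hCD' hD] at e2
  have hCne : P C ≠ 0 := fun h => by simp [measureReal_def, h] at hCr; linarith
  have hCne' : P C' ≠ 0 := fun h => by simp [measureReal_def, h] at hCr'; linarith
  have i1 : q C < P C := by
    rw [hq_apply C hC, ← setLIntegral_one C]
    exact setLIntegral_strict_mono hC hCne measurable_const
      (by rw [← hq_apply C hC]; exact measure_ne_top _ _)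
      (Filter.Eventually.of_forall fun ω h => hCA h)
  have i2 : P C' < q C' := by
    rw [hq_apply C' hC', ← setLIntegral_one C']
    exact setLIntegral_strict_mono hC' hCne' hfm
      (by rw [setLIntegral_one]; exact measure_ne_top _ _)
      (Filter.Eventually.of_forall fun ω h => hCA' h)
  have j1 : q.real C < P.real C :=
    (ENNReal.toReal_lt_toReal (measure_ne_top _ _) (measure_ne_top _ _)).2 i1
  have j2 : P.real C' < q.real C' :=
    (ENNReal.toReal_lt_toReal (measure_ne_top _ _) (measure_ne_top _ _)).2 i2
  linarith

/-! ### Choquet integrals of essentially bounded variables -/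

lemma antitone_layer (μ : Capacity Ω) {X : Ω → ℝ} (hX : Measurable X) :
    Antitone fun s : ℝ => μ.toFun {ω | s < X ω} := fun _ _ hst =>
  μ.mono' (measurableSet_lt measurable_const hX) (measurableSet_lt measurable_const hX)
    fun _ h => lt_of_le_of_lt hst h

/-- For `X` bounded by `M` almost surely, law invariance makes the layers outside `[-M, M]` trivial,
so the Choquet integral is an integral over a compact interval. -/
lemma choquet_eq_interval {P : Measure Ω} [IsProbabilityMeasure P] {μ : Capacity Ω}
    (hμ : Capacity.LawInvariant P μ) {X : Ω → ℝ} (hX : Measurable X) {M : ℝ} (hM : 0 ≤ M)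
    (hb : ∀ᵐ ω ∂P, |X ω| ≤ M) :
    choquet μ X = (∫ s in (-M)..M, μ.toFun {ω | s < X ω}) - M := by
  have hms : ∀ s : ℝ, MeasurableSet {ω | s < X ω} := fun s => measurableSet_lt measurable_const hX
  have hlow : ∀ s : ℝ, s < -M → μ.toFun {ω | s < X ω} = 1 := by
    intro s hs
    rw [← μ.univ']
    refine hμ _ _ (hms s) MeasurableSet.univ (measure_congr ?_)
    refine Filter.eventuallyEq_univ.2 ?_
    filter_upwards [hb] with ω hω
    show s < X ω
    linarith [(abs_le.1 hω).1]
  have hhigh : ∀ s : ℝ, M ≤ s → μ.toFun {ω | s < X ω} = 0 := by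
    intro s hs
    rw [← μ.empty']
    refine hμ _ _ (hms s) MeasurableSet.empty (measure_congr ?_)
    refine Filter.eventuallyEq_empty.2 ?_
    filter_upwards [hb] with ω hω
    show ¬ s < X ω
    linarith [(abs_le.1 hω).2]
  have hint : ∀ a b : ℝ, IntervalIntegrable (fun s => μ.toFun {ω | s < X ω}) volume a b :=
    fun a b => (antitone_layer μ hX).intervalIntegrable
  have e1 : ∫ s in Set.Iio (0:ℝ), (μ.toFun {ω | s < X ω} - 1)
      = (∫ s in (-M)..0, μ.toFun {ω | s < X ω}) - M := by
    rw [← integral_Iic_eq_integral_Iio, setIntegral_eq_of_subset_of_forall_sdiff_eq_zero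
      (s := Icc (-M) 0) measurableSet_Iic Icc_subset_Iic_self, integral_Icc_eq_integral_Ioc,
      ← intervalIntegral.integral_of_le (by linarith), intervalIntegral.integral_sub (hint _ _)
      (by simp)]
    · simp
    · intro s hs
      have : s < -M := by
        by_contra! h
        exact hs.2 ⟨h, hs.1⟩
      rw [hlow s this, sub_self]
  have e2 : ∫ s in Set.Ici (0:ℝ), μ.toFun {ω | s < X ω}
      = ∫ s in (0:ℝ)..M, μ.toFun {ω | s < X ω} := by
    rw [integral_Ici_eq_integral_Ioi, setIntegral_eq_of_subset_of_forall_sdiff_eq_zero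
      (s := Ioc 0 M) measurableSet_Ioi Ioc_subset_Ioi_self,
      ← intervalIntegral.integral_of_le hM]
    intro s hs
    refine hhigh s ?_
    by_contra! h
    exact hs.2 ⟨hs.1, h.le⟩
  rw [choquet, e1, e2, ← intervalIntegral.integral_add_adjacent_intervals (hint (-M) 0) (hint 0 M)]
  ring

lemma lawInvariant_of_JPRep {P : Measure Ω} [IsProbabilityMeasure P] {μ ν : Capacity Ω} {α : ℝ}
    (hjp : IsJPRep μ ν α) (hα : α ≠ 1 / 2) (hμ : Capacity.LawInvariant P μ) :
    Capacity.LawInvariant P ν := by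
  obtain ⟨-, -, hrep⟩ := hjp
  -- The representation at `A` and at `Aᶜ` is a linear system for `ν A`, `ν Aᶜ`.
  have key : ∀ A, MeasurableSet A →
      (2 * α - 1) * ν.toFun A = α * μ.toFun A + (1 - α) * μ.toFun Aᶜ - (1 - α) := by
    intro A hA
    rw [hrep A hA, hrep Aᶜ hA.compl, compl_compl]
    ring
  intro A B hA hB hAB
  have h2 : (2 * α - 1) ≠ 0 := fun h => hα (by linarith)
  apply mul_left_cancel₀ h2
  rw [key A hA, key B hB, hμ A B hA hB hAB, hμ Aᶜ Bᶜ hA.compl hB.compl (by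
    rw [prob_compl_eq_one_sub hA, prob_compl_eq_one_sub hB, hAB])]

/-- A nonconstant `Z` has an interval of levels `u` with `0 < P(Z > u) < 1`. It is found to the left
of the mean, since a nonconstant `Z` lies on either side of its mean with positive probability. -/
lemma exists_level_interval {P : Measure Ω} [IsProbabilityMeasure P] {Z : Ω → ℝ}
    (hZ : Measurable Z) (hi : Integrable Z P) (hne : Nonconstant P Z) :
    ∃ a b : ℝ, a < b ∧ ∀ u ∈ Ioo a b, 0 < P.real {ω | u < Z ω} ∧ P.real {ω | u < Z ω} < 1 := by
  set m := ∫ ω, Z ω ∂P with hm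
  have hconst : ∫ _, m ∂P = m := by simp
  have h1 : P {ω | m < Z ω} ≠ 0 := by
    intro h
    have hle : Z ≤ᵐ[P] fun _ => m := by
      have : ∀ᵐ ω ∂P, Z ω ≤ m := by simpa [ae_iff] using h
      exact this
    exact hne m ((integral_eq_iff_of_ae_le hi (integrable_const m) hle).1 (by rw [hconst]))
  have h2 : P {ω | Z ω < m} ≠ 0 := by
    intro h
    have hle : (fun _ => m) ≤ᵐ[P] Z := by
      have : ∀ᵐ ω ∂P, m ≤ Z ω := by simpa [ae_iff] using h
      exact this
    exact hne m ((integral_eq_iff_of_ae_le (integrable_const m) hi hle).1 (by rw [hconst])).symm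
  obtain ⟨n, hn⟩ : ∃ n : ℕ, P {ω | Z ω ≤ m - 1 / ((n : ℝ) + 1)} ≠ 0 := by
    by_contra! h
    refine h2 (measure_mono_null ?_ (measure_iUnion_null h))
    intro ω hω
    obtain ⟨n, hn⟩ := exists_nat_one_div_lt (sub_pos.2 (show Z ω < m from hω))
    exact mem_iUnion.2 ⟨n, show Z ω ≤ _ by linarith⟩
  refine ⟨m - 1 / ((n : ℝ) + 1), m, sub_lt_self _ (by positivity), fun u hu => ⟨?_, ?_⟩⟩
  · refine (ENNReal.toReal_pos h1 (measure_ne_top _ _)).trans_le (measureReal_mono ?_)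
    exact fun ω (hω : m < Z ω) => hu.2.trans hω
  · have hc : {ω | u < Z ω} = {ω | Z ω ≤ u}ᶜ := by ext; simp
    rw [hc, probReal_compl_eq_one_sub (measurableSet_le hZ measurable_const)]
    have : 0 < P.real {ω | Z ω ≤ u} := by
      refine (ENNReal.toReal_pos hn (measure_ne_top _ _)).trans_le (measureReal_mono ?_)
      exact fun ω (hω : Z ω ≤ _) => hω.trans hu.1.le
    linarith

lemma MemLinf.integrable {P : Measure Ω} [IsProbabilityMeasure P] {X : Ω → ℝ} (hX : MemLinf P X) :
    Integrable X P := by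
  obtain ⟨hm, M, hM⟩ := hX
  exact Integrable.of_bound hm.aestronglyMeasurable M (by simpa using hM)

lemma le_of_mem_envelope {ν : Capacity Ω} {Q : Set (Measure Ω)}
    (hQ : ∀ m ∈ Q, IsProbabilityMeasure m)
    (hν : ∀ A : Set Ω, MeasurableSet A → ν.toFun A = ⨆ m ∈ Q, (m A).toReal)
    {q : Measure Ω} (hq : q ∈ Q) {A : Set Ω} (hA : MeasurableSet A) : q.real A ≤ ν.toFun A := by
  have hb : ∀ m, ⨆ _ : m ∈ Q, (m A).toReal ≤ 1 := fun m =>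
    Real.iSup_le (fun hm => by
      have := hQ m hm
      exact measureReal_le_one) zero_le_one
  rw [hν A hA]
  refine le_trans ?_ (le_ciSup (f := fun m => ⨆ _ : m ∈ Q, (m A).toReal)
    ⟨1, by rintro _ ⟨m, rfl⟩; exact hb m⟩ q)
  simp only [ciSup_pos hq]
  rfl

/-- If `ν A + ν Aᶜ = 1` for a single event `A` with `0 < P A < 1`, then `ν = P`: every measure `q`
of the envelope is squeezed to `q B = ν A` on all events `B` with `P B = P A`. -/
lemma envelope_eq {P : Measure Ω} [IsProbabilityMeasure P] (hP : IsAtomless P)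
    {ν : Capacity Ω} (hcoh : ν.Coherent) (hlaw : Capacity.LawInvariant P ν)
    {A : Set Ω} (hA : MeasurableSet A) (h0 : 0 < P.real A) (h1 : P.real A < 1)
    (hsum : ν.toFun A + ν.toFun Aᶜ = 1) :
    ∀ B, MeasurableSet B → ν.toFun B = P.real B := by
  obtain ⟨Q, ⟨q₀, hq₀⟩, hQ, hν⟩ := hcoh
  have hQP : ∀ q ∈ Q, q = P := by
    intro q hq
    have := hQ q hq
    have hac : q ≪ P := by
      refine Measure.AbsolutelyContinuous.mk fun N hN hN0 => ?_
      have h := le_of_mem_envelope hQ hν hq hN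
      rw [hlaw N ∅ hN MeasurableSet.empty (by simpa using hN0), ν.empty'] at h
      exact (measureReal_eq_zero_iff).1 (le_antisymm h measureReal_nonneg)
    refine eq_of_const_on_level hP hac h0 h1 (c := ν.toFun A) fun B hB hBA => ?_
    have hBA' : P B = P A :=
      (ENNReal.toReal_eq_toReal_iff' (measure_ne_top _ _) (measure_ne_top _ _)).1 hBA
    have hl := le_of_mem_envelope hQ hν hq hB
    have hu := le_of_mem_envelope hQ hν hq hB.compl
    rw [hlaw B A hB hA hBA'] at hl
    rw [hlaw Bᶜ Aᶜ hB.compl hA.compl (by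
      rw [prob_compl_eq_one_sub hA, prob_compl_eq_one_sub hB, hBA']),
      probReal_compl_eq_one_sub hB] at hu
    linarith
  intro B hB
  refine le_antisymm ?_ ?_
  · rw [hν B hB]
    exact Real.iSup_le (fun m => Real.iSup_le (fun hm => by rw [hQP m hm]; rfl) measureReal_nonneg)
      measureReal_nonneg
  · have := le_of_mem_envelope hQ hν hq₀ hB
    rwa [hQP q₀ hq₀] at this

/-- If the Choquet integral is odd at a nonconstant `Z`, some event `A` with `0 < P A < 1` has
`ν A + ν Aᶜ = 1`. Indeed `E_μ[Z] + E_μ[-Z]` is `2α - 1` times the integral over the levels `u` of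
the nonnegative function `ν(Z > u) + ν(Z ≤ u) - 1`, which therefore vanishes at almost every level. -/
lemma exists_additive_event {P : Measure Ω} [IsProbabilityMeasure P]
    {μ ν : Capacity Ω} {α : ℝ} (hjp : IsJPRep μ ν α) (hα : α ≠ 1 / 2)
    (hμ : Capacity.LawInvariant P μ) {Z : Ω → ℝ} (hZ : MemLinf P Z) (hne : Nonconstant P Z)
    (hodd : choquet μ (fun ω => -(Z ω)) = -(choquet μ Z)) :
    ∃ A, MeasurableSet A ∧ 0 < P.real A ∧ P.real A < 1 ∧ ν.toFun A + ν.toFun Aᶜ = 1 := by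
  obtain ⟨a, b, hab, hlev⟩ := exists_level_interval hZ.1 hZ.integrable hne
  obtain ⟨hZm, K, hK⟩ := hZ
  obtain ⟨M, hM0, hKM, haM, hbM⟩ : ∃ M : ℝ, 0 ≤ M ∧ K ≤ M ∧ -M ≤ a ∧ b ≤ M :=
    ⟨max |K| (max |a| |b|), le_max_of_le_left (abs_nonneg _), le_max_of_le_left (le_abs_self _),
      neg_le.1 (le_max_of_le_right (le_max_of_le_left (neg_le_abs _))),
      le_max_of_le_right (le_max_of_le_right (le_abs_self _))⟩
  have hms : ∀ u : ℝ, MeasurableSet {ω | u < Z ω} := fun u => measurableSet_lt measurable_const hZm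
  have hbZ : ∀ᵐ ω ∂P, |Z ω| ≤ M := hK.mono fun ω h => h.trans hKM
  have hbZ' : ∀ᵐ ω ∂P, |-Z ω| ≤ M := by simpa using hbZ
  have hcompl : ∀ u : ℝ, {ω | -u ≤ -Z ω} = {ω | u < Z ω}ᶜ := fun u => by ext; simp
  have hanti := antitone_layer μ hZm
  have hanti' : Monotone fun u : ℝ => μ.toFun {ω | u < Z ω}ᶜ := fun u v huv =>
    μ.mono' (hms u).compl (hms v).compl
      (compl_subset_compl.2 fun ω (h : v < Z ω) => huv.trans_lt h)
  -- Replacing `{s < -Z}` by `{s ≤ -Z}` changes the probability at countably many levels only.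
  have eneg : ∫ s in (-M)..M, μ.toFun {ω | s < -Z ω}
      = ∫ u in (-M)..M, μ.toFun {ω | u < Z ω}ᶜ := by
    have h1 : ∫ s in (-M)..M, μ.toFun {ω | s < -Z ω}
        = ∫ s in (-M)..M, μ.toFun {ω | s ≤ -Z ω} := by
      refine intervalIntegral.integral_congr_ae ?_
      filter_upwards [meas_le_ae_eq_meas_lt P volume (fun ω => -Z ω)] with s hs _
      exact hμ _ _ (measurableSet_lt measurable_const hZm.neg)
        (measurableSet_le measurable_const hZm.neg) hs.symm
    have h2 := intervalIntegral.integral_comp_neg (a := -M) (b := M)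
      (fun s => μ.toFun {ω | s ≤ -Z ω})
    rw [neg_neg] at h2
    rw [h1, ← h2]
    simp only [hcompl]
  let g : ℝ → ℝ := fun u => ν.toFun {ω | u < Z ω} + ν.toFun {ω | u < Z ω}ᶜ - 1
  have hμg : ∀ u, μ.toFun {ω | u < Z ω} + μ.toFun {ω | u < Z ω}ᶜ - 1 = (2 * α - 1) * g u := by
    intro u
    rw [hjp.2.2 _ (hms u), hjp.2.2 _ (hms u).compl, compl_compl]
    simp only [g]
    ring
  have hg0 : ∀ u, 0 ≤ g u := by
    obtain ⟨Q, ⟨q, hq⟩, hQ, hν⟩ := hjp.1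
    intro u
    have := hQ q hq
    have l1 := le_of_mem_envelope hQ hν hq (hms u)
    have l2 := le_of_mem_envelope hQ hν hq (hms u).compl
    rw [probReal_compl_eq_one_sub (hms u)] at l2
    simp only [g]
    linarith
  have h2α : (2 * α - 1) ≠ 0 := fun h => hα (by linarith)
  have i1 : IntervalIntegrable (fun u => μ.toFun {ω | u < Z ω}) volume (-M) M :=
    hanti.intervalIntegrable
  have i2 : IntervalIntegrable (fun u => μ.toFun {ω | u < Z ω}ᶜ) volume (-M) M :=
    hanti'.intervalIntegrable
  have hgi : IntervalIntegrable g volume (-M) M := by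
    have h := ((i1.add i2).sub (intervalIntegrable_const (c := (1:ℝ)))).const_mul (2 * α - 1)⁻¹
    refine h.congr fun u _ => ?_
    simp only [hμg]
    rw [inv_mul_cancel_left₀ h2α]
  have hzero : ∫ u in (-M)..M, g u = 0 := by
    have hs : ∫ u in (-M)..M, (2 * α - 1) * g u = 0 := by
      simp only [← hμg]
      rw [intervalIntegral.integral_sub (i1.add i2) intervalIntegrable_const,
        intervalIntegral.integral_add i1 i2, intervalIntegral.integral_const, ← eneg]
      rw [choquet_eq_interval hμ hZm hM0 hbZ, choquet_eq_interval hμ (X := fun ω => -Z ω)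
        hZm.neg hM0 hbZ'] at hodd
      simp only [smul_eq_mul]
      linarith
    rw [intervalIntegral.integral_const_mul] at hs
    exact (mul_eq_zero.1 hs).resolve_left h2α
  have hae := (intervalIntegral.integral_eq_zero_iff_of_le_of_nonneg_ae (by linarith)
    (Filter.Eventually.of_forall hg0) hgi).1 hzero
  have hsubset : Ioo a b ⊆ Ioc (-M) M := fun u hu => ⟨haM.trans_lt hu.1, hu.2.le.trans hbM⟩
  have hae' : ∀ᵐ u ∂(volume.restrict (Ioo a b)), g u = 0 :=
    ae_mono (Measure.restrict_mono hsubset le_rfl) hae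
  rw [ae_restrict_iff' measurableSet_Ioo] at hae'
  obtain ⟨u, hu, hgu⟩ : ∃ u ∈ Ioo a b, g u = 0 := by
    by_contra! h
    have hnull : volume {u | ¬(u ∈ Ioo a b → g u = 0)} = 0 := ae_iff.1 hae'
    have hsub : Ioo a b ⊆ {u | ¬(u ∈ Ioo a b → g u = 0)} := fun u hu h' => h u hu (h' hu)
    have := measure_mono_null hsub hnull
    rw [Real.volume_Ioo, ENNReal.ofReal_eq_zero] at this
    linarith
  exact ⟨_, hms u, (hlev u hu).1, (hlev u hu).2, by simp only [g] at hgu; linarith⟩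

lemma choquet_eq_integral {P : Measure Ω} [IsProbabilityMeasure P] {μ : Capacity Ω}
    (hμ : ∀ A, MeasurableSet A → μ.toFun A = P.real A) {X : Ω → ℝ} (hX : MemLinf P X) :
    choquet μ X = ∫ ω, X ω ∂P := by
  have hlaw : Capacity.LawInvariant P μ := fun A B hA hB h => by
    rw [hμ A hA, hμ B hB, measureReal_def, h, measureReal_def]
  have hXi := hX.integrable
  obtain ⟨hXm, K, hK⟩ := hX
  have hb : ∀ᵐ ω ∂P, |X ω| ≤ |K| := hK.mono fun ω h => h.trans (le_abs_self _)
  rw [choquet_eq_interval hlaw hXm (abs_nonneg K) hb]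
  set M := |K|
  have hM0 : 0 ≤ M := abs_nonneg K
  have hlc := (hXi.add (integrable_const M)).integral_eq_integral_Ioc_meas_le (M := 2 * M)
    (by filter_upwards [hb] with ω h
        simp only [Pi.zero_apply, Pi.add_apply]
        linarith [(abs_le.1 h).1])
    (by filter_upwards [hb] with ω h
        simp only [Pi.add_apply]
        linarith [(abs_le.1 h).2])
  have hs : ∫ ω, (X + fun _ : Ω => M) ω ∂P = (∫ ω, X ω ∂P) + M := by
    simp only [Pi.add_apply]
    rw [integral_add hXi (integrable_const M)]
    simp
  rw [hs, ← intervalIntegral.integral_of_le (by linarith)] at hlc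
  have hsub := intervalIntegral.integral_comp_add_right (a := -M) (b := M)
    (fun t => P.real {ω | t ≤ (X + fun _ : Ω => M) ω}) M
  rw [neg_add_cancel, ← two_mul, ← hlc] at hsub
  rw [← add_sub_cancel_right (∫ ω, X ω ∂P) M, ← hsub]
  congr 1
  refine intervalIntegral.integral_congr_ae ?_
  filter_upwards [meas_le_ae_eq_meas_lt P volume X] with s hs _
  rw [hμ _ (measurableSet_lt measurable_const hXm), measureReal_def, ← hs, measureReal_def]
  simp

/-- collapse to the mean for Choquet integrals associated with
law-invariant JP capacities `(ν, α)`, `α ≠ 1/2`: four equivalent conditions. -/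
theorem collapse_choquet
    (P : Measure Ω) [IsProbabilityMeasure P] (hP : IsAtomless P)
    (μ ν : Capacity Ω) (α : ℝ) (hjp : IsJPRep μ ν α) (hα : α ≠ 1/2)
    (hμlaw : Capacity.LawInvariant P μ) :
    [ (∀ X : Ω → ℝ, MemLinf P X → choquet μ X = ∫ ω, X ω ∂P),
      (∃ a : ℝ, ∃ Z : Ω → ℝ, MemLinf P Z ∧ Nonconstant P Z ∧
        ∀ X : Ω → ℝ, MemLinf P X → ∀ t : ℝ,
          choquet μ (fun ω => X ω + t * Z ω) = choquet μ X + a * t),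
      (∃ a : ℝ, ∃ Z : Ω → ℝ, MemLinf P Z ∧ Nonconstant P Z ∧
        ∀ t : ℝ, choquet μ (fun ω => t * Z ω) = a * t),
      (∃ Z : Ω → ℝ, MemLinf P Z ∧ Nonconstant P Z ∧
        choquet μ (fun ω => -(Z ω)) = -(choquet μ Z)) ].TFAE := by
  tfae_have 1 → 2 := by
    intro h
    obtain ⟨B, hB, -, hB0, hB1⟩ := hP univ MeasurableSet.univ (by simp)
    have hZ : MemLinf P (B.indicator fun _ => (1:ℝ)) := by
      refine ⟨measurable_const.indicator hB, 1, Filter.Eventually.of_forall fun ω => ?_⟩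
      by_cases hω : ω ∈ B <;> simp [hω]
    refine ⟨∫ ω, B.indicator (fun _ => (1:ℝ)) ω ∂P, B.indicator fun _ => 1, hZ, ?_, ?_⟩
    · intro c hc
      by_cases hc1 : c = 1
      · refine hB1.ne (measure_congr (Filter.eventuallyEq_univ.2 ?_))
        filter_upwards [hc] with ω hω
        by_contra hn
        simp [hn, hc1] at hω
      · refine hB0.ne' (measure_mono_null ?_ (ae_iff.1 hc))
        intro ω hω h'
        simp only [indicator_of_mem hω] at h'
        exact hc1 h'.symm
    · intro X hX t
      have hXZ : MemLinf P fun ω => X ω + t * B.indicator (fun _ => (1:ℝ)) ω := by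
        obtain ⟨hm, K, hK⟩ := hX
        obtain ⟨hm', L, hL⟩ := hZ
        refine ⟨hm.add (hm'.const_mul t), K + |t| * L, ?_⟩
        filter_upwards [hK, hL] with ω h1 h2
        refine (abs_add_le _ _).trans (add_le_add h1 ?_)
        rw [abs_mul]
        exact mul_le_mul_of_nonneg_left h2 (abs_nonneg t)
      rw [h _ hXZ, h _ hX, integral_add hX.integrable (hZ.integrable.const_mul t),
        integral_const_mul, mul_comm t]
  tfae_have 2 → 3 := by
    rintro ⟨a, Z, hZ, hne, h⟩
    refine ⟨a, Z, hZ, hne, fun t => ?_⟩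
    have hz : MemLinf P fun _ : Ω => (0:ℝ) := ⟨measurable_const, 0, by simp⟩
    have h0 : choquet μ (fun _ : Ω => (0:ℝ)) = 0 := by
      rw [choquet_eq_interval hμlaw hz.1 le_rfl (by simp)]
      simp
    simpa [h0] using h _ hz t
  tfae_have 3 → 4 := by
    rintro ⟨a, Z, hZ, hne, h⟩
    refine ⟨Z, hZ, hne, ?_⟩
    have h1 := h 1
    have h2 := h (-1)
    simp only [one_mul, neg_mul, mul_one, mul_neg] at h1 h2
    rw [h1, h2]
  tfae_have 4 → 1 := by
    rintro ⟨Z, hZ, hne, hodd⟩ X hX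
    obtain ⟨A, hA, hA0, hA1, hsum⟩ := exists_additive_event hjp hα hμlaw hZ hne hodd
    have hν := envelope_eq hP hjp.1 (lawInvariant_of_JPRep hjp hα hμlaw) hA hA0 hA1 hsum
    refine choquet_eq_integral (fun B hB => ?_) hX
    rw [hjp.2.2 B hB, hν B hB, hν Bᶜ hB.compl, probReal_compl_eq_one_sub hB]
    ring
  tfae_finish

end Collapse
end
end

section
/- Let (φ, C, D, p) be a feasible quadruple. If C is increasing and φ is weakly increasing, then there exists an optimal solution of the problem (maximize φ(X) over X ∈ C with E[DX] = p) that is antimonotone with D. -/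
/-!
Let `X` be optimal. The space being atomless, `X` can be rearranged into a variable `Y` of the same
law that is antimonotone with `D` (`exists_antimonotone_rearrangement`). By law invariance `Y ∈ C`
and `φ Y = φ X`, and by the Hardy–Littlewood inequality (`integral_mul_le_of_joint_le`)
`E[D Y] ≤ E[D X] = p`. Hence `m = (p - E[D Y]) / E[D]` is nonnegative, and `Y + m` lies in `C`,
satisfies the budget constraint, is still antimonotone with `D`, and has `φ (Y + m) ≥ φ X`.

The rearrangement rests on a variable `W` whose law has no atoms and which is strictly larger
wherever `D` is strictly larger (`exists_noAtoms_refinement`). Then `F_{-W}(-W)` is uniform, and the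
quantile function of `X` evaluated there is a copy of `X` that decreases in `W`
(`exists_rearrangement`). Sets of the form `{Y ≤ x}` and `{D > y}` are then upper sets for one total
preorder, hence nested, which is exactly antimonotonicity.

The Hardy–Littlewood inequality follows from Hoeffding's formula, which writes `E[X D]` as an
integral over `(s, t)` of a quantity increasing in `P (X ≤ s, D ≤ t)` and otherwise depending only
on the marginal laws; antimonotonicity makes that joint probability as small as possible.
-/

open MeasureTheory Set List
open scoped ENNReal NNReal

noncomputable section

namespace Collapse

variable {Ω : Type*} [MeasurableSpace Ω]

/-! ### A random variable with continuous law -/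

/-- Some measurable `H` splits `A` at least half as evenly as any measurable set does. -/
lemma exists_half_optimal_split (P : Measure Ω) [IsProbabilityMeasure P] (A : Set Ω) :
    ∃ H : Set Ω, MeasurableSet H ∧ ∀ B : Set Ω, MeasurableSet B →
      min (P.real (A ∩ B)) (P.real (A \ B)) ≤ 2 * min (P.real (A ∩ H)) (P.real (A \ H)) := by
  set S : Set ℝ := {r | ∃ B : Set Ω, MeasurableSet B ∧
    r = min (P.real (A ∩ B)) (P.real (A \ B))} with hS
  have hbdd : BddAbove S := by
    refine ⟨1, ?_⟩
    rintro r ⟨B, -, rfl⟩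
    exact (min_le_left _ _).trans measureReal_le_one
  have hne : S.Nonempty := ⟨_, ∅, MeasurableSet.empty, rfl⟩
  by_cases h0 : sSup S ≤ 0
  · refine ⟨∅, MeasurableSet.empty, fun B hB => ?_⟩
    have h1 : min (P.real (A ∩ B)) (P.real (A \ B)) ≤ sSup S := le_csSup hbdd ⟨B, hB, rfl⟩
    have h2 : 0 ≤ min (P.real (A ∩ ∅)) (P.real (A \ ∅)) :=
      le_min measureReal_nonneg measureReal_nonneg
    linarith
  · push Not at h0
    obtain ⟨r, ⟨H, hH, rfl⟩, hr⟩ := exists_lt_of_lt_csSup hne (half_lt_self h0)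
    refine ⟨H, hH, fun B hB => ?_⟩
    have h1 : min (P.real (A ∩ B)) (P.real (A \ B)) ≤ sSup S := le_csSup hbdd ⟨B, hB, rfl⟩
    linarith

/-- The binary tree of cells obtained by splitting `univ` repeatedly, a cell `A` being cut by `H A`;
the list records the choices made, the latest one first. -/
def cell (H : Set Ω → Set Ω) : List Bool → Set Ω
  | [] => univ
  | true :: l => cell H l ∩ H (cell H l)
  | false :: l => cell H l \ H (cell H l)

/-- The branch of the tree of cells that follows the point `ω`. -/
def branch (H : Set Ω → Set Ω) (ω : Ω) : ℕ → List Bool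
  | 0 => []
  | n + 1 => by
      classical
      exact decide (ω ∈ H (cell H (branch H ω n))) :: branch H ω n

/-- An atomless space carries a random variable with values in `[0, 1]` whose law has no atoms.
It encodes to which of the countably many splitting sets `ω` belongs. A fibre `E` of positive
measure would be contained in all cells of one branch; as `E` itself can be split, each cell of the
branch would lose at least a fixed mass to its sibling, which is impossible. -/
lemma exists_noAtoms_unit (P : Measure Ω) [IsProbabilityMeasure P] (hP : IsAtomless P) :
    ∃ V : Ω → ℝ, Measurable V ∧ (∀ ω, 0 ≤ V ω ∧ V ω ≤ 1) ∧ ∀ v, P {ω | V ω = v} = 0 := by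
  classical
  choose H hHm hH using exists_half_optimal_split P
  let S : ℕ → Set Ω := fun k => H (cell H ((Encodable.decode (α := List Bool) k).getD []))
  have hSl : ∀ l, S (Encodable.encode l) = H (cell H l) := by
    intro l; simp [S]
  let b : Ω → ℕ → Bool := fun ω k => decide (ω ∈ S k)
  let V0 : Ω → ℝ := fun ω => Cardinal.cantorFunction (1/3) (b ω)
  have hV0m : Measurable V0 := by
    have : ∀ k, Measurable fun ω => Cardinal.cantorFunctionAux (1/3) (b ω) k := by
      intro k
      have : (fun ω => Cardinal.cantorFunctionAux (1/3) (b ω) k)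
          = (S k).indicator (fun _ => ((1:ℝ)/3)^k) := by
        funext ω
        by_cases h : ω ∈ S k
        · rw [Cardinal.cantorFunctionAux_true (by simpa [b] using h)]; simp [h]
        · rw [Cardinal.cantorFunctionAux_false (by simpa [b] using h)]; simp [h]
      rw [this]
      exact measurable_const.indicator (hHm _)
    exact Measurable.tsum this
  have hE : ∀ v, P {ω | V0 ω = v} = 0 := by
    intro v
    by_contra hpos
    have hmeas : MeasurableSet {ω | V0 ω = v} := hV0m (measurableSet_singleton v)
    set E := {ω | V0 ω = v} with hEdef
    obtain ⟨B, hB, hBE, hB0, hBlt⟩ := hP E hmeas (pos_iff_ne_zero.mpr hpos)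
    have hEB : 0 < P (E \ B) := by
      rw [measure_sdiff hBE hB.nullMeasurableSet (measure_ne_top _ _)]
      exact tsub_pos_of_lt hBlt
    obtain ⟨ω0, hω0⟩ : B.Nonempty := nonempty_of_measure_ne_zero hB0.ne'
    have hω0E : ω0 ∈ E := hBE hω0
    have hmem : ∀ ω ∈ E, ∀ l, ω ∈ H (cell H l) ↔ ω0 ∈ H (cell H l) := by
      intro ω hω l
      have h1 : b ω = b ω0 := by
        apply Cardinal.cantorFunction_injective (c := 1/3) (by norm_num) (by norm_num)
        exact (show V0 ω = v from hω).trans (show V0 ω0 = v from hω0E).symm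
      have h2 := congrFun h1 (Encodable.encode l)
      simpa [b, hSl] using h2
    have hEsub : ∀ n, E ⊆ cell H (branch H ω0 n) := by
      intro n
      induction n with
      | zero => intro ω _; simp [branch, cell]
      | succ n ih =>
        intro ω hω
        by_cases h : ω0 ∈ H (cell H (branch H ω0 n))
        · simpa [branch, cell, h] using ⟨ih hω, (hmem ω hω _).2 h⟩
        · simpa [branch, cell, h] using ⟨ih hω, fun h' => h ((hmem ω hω _).1 h')⟩
    set c := min (P.real B) (P.real (E \ B)) with hc
    have hcpos : 0 < c := lt_min (ENNReal.toReal_pos hB0.ne' (measure_ne_top _ _))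
      (ENNReal.toReal_pos hEB.ne' (measure_ne_top _ _))
    have hdec : ∀ n : ℕ, P.real (cell H (branch H ω0 n)) ≤ 1 - n * (c / 2) := by
      intro n
      induction n with
      | zero => simp [branch, cell]
      | succ n ih =>
        set A := cell H (branch H ω0 n) with hA
        have hsplit : P.real (A ∩ H A) + P.real (A \ H A) = P.real A :=
          measureReal_inter_add_sdiff (hHm A)
        have hle : c ≤ min (P.real (A ∩ B)) (P.real (A \ B)) := by
          refine min_le_min (measureReal_mono ?_) (measureReal_mono ?_)
          · exact subset_inter (hBE.trans (hEsub n)) subset_rfl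
          · exact sdiff_subset_sdiff_left (hEsub n)
        have h3 := hle.trans (hH A B hB)
        have h4 := min_le_left (P.real (A ∩ H A)) (P.real (A \ H A))
        have h5 := min_le_right (P.real (A ∩ H A)) (P.real (A \ H A))
        push_cast
        by_cases h : ω0 ∈ H A
        · have : cell H (branch H ω0 (n+1)) = A ∩ H A := by
            simp [branch, cell, ← hA, h]
          rw [this]; linarith
        · have : cell H (branch H ω0 (n+1)) = A \ H A := by
            simp [branch, cell, ← hA, h]
          rw [this]; linarith
    obtain ⟨n, hn⟩ := exists_nat_gt (1 / (c / 2))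
    rw [div_lt_iff₀ (by positivity)] at hn
    have := hdec n
    have h0 : 0 ≤ P.real (cell H (branch H ω0 n)) := measureReal_nonneg
    linarith
  -- The sum `∑ 3⁻ⁿ bₙ` lies in `[0, 3/2]`; half of it lies in the unit interval.
  refine ⟨fun ω => V0 ω / 2, hV0m.div_const 2, fun ω => ⟨?_, ?_⟩, fun v => ?_⟩
  · exact div_nonneg (tsum_nonneg fun k => Cardinal.cantorFunctionAux_nonneg (by norm_num))
      (by norm_num)
  · have h1 : V0 ω ≤ Cardinal.cantorFunction (1/3) (fun _ => true) :=
      Cardinal.cantorFunction_le (by norm_num) (by norm_num) (by simp)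
    have h2 : Cardinal.cantorFunction (1/3) (fun _ => true) = 3/2 := by
      simp only [Cardinal.cantorFunction, Cardinal.cantorFunctionAux, cond_true]
      rw [tsum_geometric_of_lt_one (by norm_num) (by norm_num)]; norm_num
    show V0 ω / 2 ≤ 1
    linarith
  · have : {ω | V0 ω / 2 = v} = {ω | V0 ω = 2 * v} := by
      ext ω; simp only [mem_ofPred_eq]; constructor <;> intro h <;> linarith
    rw [this]; exact hE _

/-- On an atomless space `D` can be refined to a random variable `W` without atoms that orders
`Ω` at least as finely as `D`. Ties of `D` are broken by a variable `V` without atoms, inserted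
into gaps that `d ↦ d + P (D < d)` opens at the atoms of `D`. -/
lemma exists_noAtoms_refinement (P : Measure Ω) [IsProbabilityMeasure P] (hP : IsAtomless P)
    (D : Ω → ℝ) (hD : Measurable D) :
    ∃ W : Ω → ℝ, Measurable W ∧ (∀ w, P {ω | W ω = w} = 0) ∧
      ∀ ω ω', D ω < D ω' → W ω < W ω' := by
  obtain ⟨V, hVm, hV01, hV⟩ := exists_noAtoms_unit P hP
  let G : ℝ → ℝ := fun d => P.real {ω | D ω < d}
  let F : ℝ → ℝ := fun d => P.real {ω | D ω ≤ d}
  have hG : Monotone G := fun a b hab => measureReal_mono fun ω (h : D ω < a) => h.trans_le hab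
  have hF : Monotone F := fun a b hab => measureReal_mono fun ω (h : D ω ≤ a) => h.trans hab
  have hGF : ∀ d, G d ≤ F d := fun d => measureReal_mono fun ω (h : D ω < d) => h.le
  have hFG : ∀ d d', d < d' → F d ≤ G d' :=
    fun d d' h => measureReal_mono fun ω (h' : D ω ≤ d) => h'.trans_lt h
  let W : Ω → ℝ := fun ω => D ω + G (D ω) + (F (D ω) - G (D ω)) * V ω
  have hmono : ∀ ω ω', D ω < D ω' → W ω < W ω' := by
    intro ω ω' h
    have h1 : (F (D ω) - G (D ω)) * V ω ≤ (F (D ω) - G (D ω)) * 1 :=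
      mul_le_mul_of_nonneg_left (hV01 ω).2 (sub_nonneg.2 (hGF _))
    have h2 : 0 ≤ (F (D ω') - G (D ω')) * V ω' :=
      mul_nonneg (sub_nonneg.2 (hGF _)) (hV01 ω').1
    have h3 := hFG _ _ h
    simp only [W]
    linarith
  refine ⟨W, ?_, ?_, hmono⟩
  · have hGm := hG.measurable.comp hD
    have hFm := hF.measurable.comp hD
    exact (hD.add hGm).add ((hFm.sub hGm).mul hVm)
  · intro w
    rcases eq_empty_or_nonempty {ω | W ω = w} with he | ⟨ω0, hω0⟩
    · rw [he]; simp
    have hsub : ∀ ω, W ω = w → D ω = D ω0 := by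
      intro ω hω
      have hω0' : W ω0 = w := hω0
      rcases lt_trichotomy (D ω) (D ω0) with h | h | h
      · have := hmono _ _ h; linarith
      · exact h
      · have := hmono _ _ h; linarith
    set d := D ω0 with hd
    have hsplit : F d - G d = P.real {ω | D ω = d} := by
      have : {ω | D ω = d} = {ω | D ω ≤ d} \ {ω | D ω < d} := by
        ext ω; simp only [mem_ofPred_eq, mem_sdiff, not_lt]; exact le_antisymm_iff
      have hss : {ω | D ω < d} ⊆ {ω | D ω ≤ d} := fun ω (h : D ω < d) => h.le
      rw [this, measureReal_sdiff hss (measurableSet_lt hD measurable_const)]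
    by_cases h0 : F d - G d = 0
    · rw [h0, eq_comm, measureReal_eq_zero_iff] at hsplit
      exact measure_mono_null (fun ω hω => hsub ω hω) hsplit
    · refine measure_mono_null (fun ω (hω : W ω = w) => ?_) (hV ((w - d - G d) / (F d - G d)))
      have h1 := hsub ω hω
      simp only [W, h1] at hω
      simp only [mem_ofPred_eq]
      rw [eq_div_iff h0]; linarith

/-! ### Monotone rearrangement -/

lemma continuous_cdf_of_noAtoms (μ : Measure ℝ) [IsProbabilityMeasure μ]
    (h : ∀ x, μ {x} = 0) : Continuous (ProbabilityTheory.cdf μ) := by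
  rw [continuous_iff_continuousAt]
  intro a
  rw [(ProbabilityTheory.monotone_cdf μ).continuousAt_iff_leftLim_eq_rightLim,
    StieltjesFunction.rightLim_eq]
  have h1 := (ProbabilityTheory.cdf μ).measure_singleton a
  rw [ProbabilityTheory.measure_cdf, h a, eq_comm, ENNReal.ofReal_eq_zero] at h1
  exact le_antisymm ((ProbabilityTheory.monotone_cdf μ).leftLim_le le_rfl) (by linarith)

/-- Probability integral transform: if the law of `W` has no atoms, then its distribution function
evaluated at `W` is uniformly distributed on `[0, 1]`. -/
lemma measureReal_cdf_le (P : Measure Ω) [IsProbabilityMeasure P] (W : Ω → ℝ) (hW : Measurable W)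
    (hW0 : ∀ w, P {ω | W ω = w} = 0) (t : ℝ) (ht0 : 0 ≤ t) (ht1 : t ≤ 1) :
    P.real {ω | ProbabilityTheory.cdf (P.map W) (W ω) ≤ t} = t := by
  have : IsProbabilityMeasure (P.map W) := Measure.isProbabilityMeasure_map hW.aemeasurable
  set F := ProbabilityTheory.cdf (P.map W) with hF
  have hFmono : Monotone F := ProbabilityTheory.monotone_cdf _
  have hFc : Continuous F := by
    apply continuous_cdf_of_noAtoms
    intro x
    rw [Measure.map_apply hW (measurableSet_singleton x)]
    exact hW0 x
  have hFP : ∀ a, F a = P.real {ω | W ω ≤ a} := by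
    intro a
    rw [hF, ProbabilityTheory.cdf_eq_real, map_measureReal_apply hW measurableSet_Iic]
    rfl
  have hatt : ∀ s, 0 < s → s < 1 → ∃ a, F a = s := by
    intro s h0 h1
    obtain ⟨a, ha⟩ := ((ProbabilityTheory.tendsto_cdf_atBot (P.map W)).eventually
      (gt_mem_nhds h0)).exists
    obtain ⟨b, hb⟩ := ((ProbabilityTheory.tendsto_cdf_atTop (P.map W)).eventually
      (lt_mem_nhds h1)).exists
    exact mem_range_of_exists_le_of_exists_ge hFc ⟨a, le_of_lt ha⟩ ⟨b, le_of_lt hb⟩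
  have hlow : ∀ s, 0 < s → s < 1 → s ≤ P.real {ω | F (W ω) ≤ s} := by
    intro s h0 h1
    obtain ⟨a, ha⟩ := hatt s h0 h1
    calc s = P.real {ω | W ω ≤ a} := by rw [← hFP, ha]
      _ ≤ _ := measureReal_mono fun ω (hω : W ω ≤ a) => (hFmono hω).trans ha.le
  have hup : ∀ s, 0 < s → s < 1 → P.real {ω | F (W ω) < s} ≤ s := by
    intro s h0 h1
    obtain ⟨a, ha⟩ := hatt s h0 h1
    calc _ ≤ P.real {ω | W ω ≤ a} := measureReal_mono fun ω (hω : F (W ω) < s) => by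
          by_contra hlt
          have h2 : a ≤ W ω := le_of_lt (not_le.1 hlt)
          have := hFmono h2
          linarith
      _ = s := by rw [← hFP, ha]
  apply le_antisymm
  · rcases ht1.eq_or_lt with rfl | ht1
    · exact measureReal_le_one
    refine le_of_forall_gt_imp_ge_of_dense fun s hs => ?_
    rcases lt_or_ge s 1 with h1 | h1
    · exact (measureReal_mono fun ω (hω : F (W ω) ≤ t) => hω.trans_lt hs).trans
        (hup s (ht0.trans_lt hs) h1)
    · exact measureReal_le_one.trans h1
  · rcases ht0.eq_or_lt with rfl | ht0
    · exact measureReal_nonneg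
    refine le_of_forall_lt_imp_le_of_dense fun s hs => ?_
    rcases lt_or_ge 0 s with h1 | h1
    · exact (hlow s h1 (hs.trans_le ht1)).trans
        (measureReal_mono fun ω (hω : F (W ω) ≤ s) => hω.trans hs.le)
    · exact h1.trans measureReal_nonneg

/-- The left-continuous quantile function of `ν`, set to `0` outside `(0, 1)`. -/
def quantileFn (ν : Measure ℝ) (u : ℝ) : ℝ :=
  open Classical in
  if u ∈ Ioo (0 : ℝ) 1 then sInf {x | u ≤ ProbabilityTheory.cdf ν x} else 0

lemma quantileFn_le_iff (ν : Measure ℝ) [IsProbabilityMeasure ν] {u : ℝ} (hu : u ∈ Ioo (0 : ℝ) 1)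
    (x : ℝ) : quantileFn ν u ≤ x ↔ u ≤ ProbabilityTheory.cdf ν x := by
  rw [quantileFn, if_pos hu]
  have hmono := ProbabilityTheory.monotone_cdf ν
  obtain ⟨a, ha⟩ := ((ProbabilityTheory.tendsto_cdf_atBot ν).eventually
    (gt_mem_nhds hu.1)).exists
  obtain ⟨b, hb⟩ := ((ProbabilityTheory.tendsto_cdf_atTop ν).eventually
    (lt_mem_nhds hu.2)).exists
  have hbdd : BddBelow {x | u ≤ ProbabilityTheory.cdf ν x} := by
    refine ⟨a, fun y (hy : u ≤ _) => ?_⟩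
    by_contra hlt
    have h2 := hmono (le_of_lt (not_le.1 hlt))
    linarith
  have hne : {x | u ≤ ProbabilityTheory.cdf ν x}.Nonempty := ⟨b, le_of_lt hb⟩
  constructor
  · intro h
    -- The distribution function is right continuous, so it suffices to look at `y > x`.
    have hcont : Filter.Tendsto (ProbabilityTheory.cdf ν) (nhdsWithin x (Ioi x))
        (nhds (ProbabilityTheory.cdf ν x)) :=
      ((ProbabilityTheory.cdf ν).right_continuous x).mono_left
        (nhdsWithin_mono _ Ioi_subset_Ici_self)
    refine ge_of_tendsto hcont ?_
    filter_upwards [self_mem_nhdsWithin] with y hy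
    obtain ⟨s, hs, hsy⟩ := exists_lt_of_csInf_lt hne (h.trans_lt hy)
    exact le_trans hs (hmono hsy.le)
  · intro h
    exact csInf_le hbdd h

lemma measurable_quantileFn (ν : Measure ℝ) [IsProbabilityMeasure ν] :
    Measurable (quantileFn ν) := by
  refine measurable_of_Iic fun x => ?_
  have : quantileFn ν ⁻¹' Iic x = (Ioo 0 1 ∩ Iic (ProbabilityTheory.cdf ν x)) ∪
      ((Ioo 0 1)ᶜ ∩ {_u | (0 : ℝ) ≤ x}) := by
    ext u
    by_cases hu : u ∈ Ioo (0 : ℝ) 1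
    · have := quantileFn_le_iff ν hu x
      simp only [mem_preimage, mem_Iic, mem_union, mem_inter_iff, hu, mem_compl_iff, this]
      simp
    · have : quantileFn ν u = 0 := by rw [quantileFn, if_neg hu]
      simp only [mem_preimage, mem_Iic, mem_union, mem_inter_iff, hu, mem_compl_iff, this]
      simp
  rw [this]
  exact (measurableSet_Ioo.inter measurableSet_Iic).union
    (measurableSet_Ioo.compl.inter (MeasurableSet.const _))

/-- `X` can be rearranged into a variable of the same law that is nondecreasing in `W` on a set of
full measure, namely the quantile function of `X` at the uniform variable `F_W(W)`. -/
lemma exists_rearrangement (P : Measure Ω) [IsProbabilityMeasure P] (W X : Ω → ℝ)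
    (hW : Measurable W) (hW0 : ∀ w, P {ω | W ω = w} = 0) (hX : Measurable X) :
    ∃ Y : Ω → ℝ, Measurable Y ∧ SameLaw P Y X ∧ ∃ N : Set Ω, P Nᶜ = 0 ∧
      ∀ ω ∈ N, ∀ ω' ∈ N, W ω ≤ W ω' → Y ω ≤ Y ω' := by
  have : IsProbabilityMeasure (P.map W) := Measure.isProbabilityMeasure_map hW.aemeasurable
  have : IsProbabilityMeasure (P.map X) := Measure.isProbabilityMeasure_map hX.aemeasurable
  have hunif := measureReal_cdf_le P W hW hW0
  let U : Ω → ℝ := fun ω => ProbabilityTheory.cdf (P.map W) (W ω)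
  have hFmono := ProbabilityTheory.monotone_cdf (P.map W)
  have hU : Measurable U := hFmono.measurable.comp hW
  have hYm : Measurable fun ω => quantileFn (P.map X) (U ω) :=
    (measurable_quantileFn (P.map X)).comp hU
  let N : Set Ω := {ω | U ω ∈ Ioo (0 : ℝ) 1}
  have hN : P Nᶜ = 0 := by
    have hsub : Nᶜ ⊆ {ω | U ω ≤ 0} ∪ {ω | U ω < 1}ᶜ := by
      intro ω hω
      by_contra hcon
      simp only [mem_union, mem_ofPred_eq, mem_compl_iff, not_or, not_le, not_not] at hcon
      exact hω hcon
    refine measure_mono_null hsub (measure_union_null ?_ ?_)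
    · have h := hunif 0 le_rfl zero_le_one
      exact (measureReal_eq_zero_iff).1 h
    · rw [← measureReal_eq_zero_iff,
        probReal_compl_eq_one_sub (measurableSet_lt hU measurable_const), sub_eq_zero]
      refine le_antisymm ?_ measureReal_le_one
      refine le_of_forall_lt_imp_le_of_dense fun s hs => ?_
      rcases lt_or_ge s 0 with h0 | h0
      · exact h0.le.trans measureReal_nonneg
      · calc s = P.real {ω | U ω ≤ s} := (hunif s h0 hs.le).symm
          _ ≤ _ := measureReal_mono fun ω (hω : U ω ≤ s) => hω.trans_lt hs
  refine ⟨_, hYm, ?_, N, hN, ?_⟩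
  · have : IsProbabilityMeasure (P.map fun ω => quantileFn (P.map X) (U ω)) :=
      Measure.isProbabilityMeasure_map hYm.aemeasurable
    refine Measure.ext_of_Iic _ _ fun x => ?_
    rw [← measureReal_eq_measureReal_iff, map_measureReal_apply hYm measurableSet_Iic,
      ← ProbabilityTheory.cdf_eq_real]
    rw [← hunif (ProbabilityTheory.cdf (P.map X) x) (ProbabilityTheory.cdf_nonneg _ _)
      (ProbabilityTheory.cdf_le_one _ _)]
    refine measureReal_congr ?_
    filter_upwards [mem_ae_iff.2 hN] with ω hω
    exact propext (quantileFn_le_iff (P.map X) hω x)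
  · intro ω hω ω' hω' h
    rw [quantileFn_le_iff _ hω]
    exact (hFmono h).trans ((quantileFn_le_iff _ hω' _).1 le_rfl)

/-- If both `A` and the complement of `B` are (almost surely) lower sets for the order induced by
`W`, then one contains the other, so `A` and `B` overlap as little as their measures allow. -/
lemma measure_inter_eq_of_nested (P : Measure Ω) [IsProbabilityMeasure P] (W : Ω → ℝ)
    (A B N : Set Ω) (hB : MeasurableSet B) (hN : P Nᶜ = 0)
    (hAl : ∀ ω ∈ N, ∀ ω' ∈ N, W ω ≤ W ω' → ω' ∈ A → ω ∈ A)
    (hBu : ∀ ω ∈ N, ∀ ω' ∈ N, W ω ≤ W ω' → ω ∈ B → ω' ∈ B) :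
    P (A ∩ B) = P A + P B - 1 := by
  have hNae : N ∈ ae P := mem_ae_iff.2 hN
  have hsum : P (A ∪ B) + P (A ∩ B) = P A + P B := measure_union_add_inter A hB
  by_cases hdis : ∃ ω ∈ N, ω ∈ A ∩ B
  · obtain ⟨ω, hωN, hωA, hωB⟩ := hdis
    have huniv : P (A ∪ B) = 1 := by
      rw [← measure_univ (μ := P)]
      refine measure_congr ?_
      filter_upwards [hNae] with ω' hω'
      refine propext (iff_of_true ?_ trivial)
      rcases le_total (W ω') (W ω) with h | h
      · exact Or.inl (hAl ω' hω' ω hωN h hωA)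
      · exact Or.inr (hBu ω hωN ω' hω' h hωB)
    rw [← hsum, huniv, ENNReal.add_sub_cancel_left ENNReal.one_ne_top]
  · have h0 : P (A ∩ B) = 0 :=
      measure_mono_null (fun ω hω hωN => hdis ⟨ω, hωN, hω⟩) hN
    rw [h0, add_zero] at hsum
    rw [h0, ← hsum, tsub_eq_zero_of_le prob_le_one]

/-! ### The Hardy–Littlewood inequality -/

/-- The layer function `1{x ≤ s} - 1{0 ≤ s}`; its integral over `s` is `-x`. -/
def layer (x s : ℝ) : ℝ := (if x ≤ s then 1 else 0) - (if 0 ≤ s then 1 else 0)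

lemma layer_eq (x : ℝ) : layer x =
    fun s => (Ico x 0).indicator (fun _ => (1 : ℝ)) s - (Ico 0 x).indicator (fun _ => 1) s := by
  funext s
  simp only [layer, indicator_apply, mem_Ico]
  grind

lemma abs_layer_eq (x : ℝ) : (fun s => ‖layer x s‖) =
    fun s => (Ico x 0).indicator (fun _ => (1 : ℝ)) s + (Ico 0 x).indicator (fun _ => 1) s := by
  funext s
  simp only [layer, indicator_apply, mem_Ico, Real.norm_eq_abs]
  grind

lemma integrable_indicator_Ico (a b : ℝ) :
    Integrable ((Ico a b).indicator fun _ => (1 : ℝ)) := by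
  rw [integrable_indicator_iff measurableSet_Ico]
  exact integrableOn_const (by simp)

lemma integrable_layer (x : ℝ) : Integrable (layer x) := by
  rw [layer_eq]
  exact (integrable_indicator_Ico _ _).sub (integrable_indicator_Ico _ _)

lemma integral_layer (x : ℝ) : ∫ s, layer x s = -x := by
  rw [layer_eq, integral_sub (integrable_indicator_Ico _ _) (integrable_indicator_Ico _ _),
    integral_indicator_const _ measurableSet_Ico, integral_indicator_const _ measurableSet_Ico,
    Real.volume_real_Ico, Real.volume_real_Ico]
  simp only [smul_eq_mul]
  grind

lemma integral_abs_layer (x : ℝ) : ∫ s, ‖layer x s‖ = |x| := by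
  rw [abs_layer_eq, integral_add (integrable_indicator_Ico _ _) (integrable_indicator_Ico _ _),
    integral_indicator_const _ measurableSet_Ico, integral_indicator_const _ measurableSet_Ico,
    Real.volume_real_Ico, Real.volume_real_Ico]
  simp only [smul_eq_mul]
  grind

lemma measurable_layer : Measurable (fun q : ℝ × ℝ => layer q.1 q.2) := by
  unfold layer
  refine Measurable.sub ?_ ?_
  · exact Measurable.ite (measurableSet_le measurable_fst measurable_snd)
      measurable_const measurable_const
  · exact Measurable.ite (measurableSet_le measurable_const measurable_snd)
      measurable_const measurable_const

lemma integrable_layer_mul (P : Measure Ω) [IsProbabilityMeasure P] (X D : Ω → ℝ)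
    (hX : Measurable X) (hD : Measurable D) (hXD : Integrable (fun ω => X ω * D ω) P) :
    Integrable (fun q : Ω × (ℝ × ℝ) => layer (X q.1) q.2.1 * layer (D q.1) q.2.2)
      (P.prod (volume.prod volume)) := by
  have hm : Measurable fun q : Ω × (ℝ × ℝ) => layer (X q.1) q.2.1 * layer (D q.1) q.2.2 :=
    (measurable_layer.comp ((hX.comp measurable_fst).prodMk measurable_snd.fst)).mul
      (measurable_layer.comp ((hD.comp measurable_fst).prodMk measurable_snd.snd))
  rw [integrable_prod_iff hm.aestronglyMeasurable]
  refine ⟨Filter.Eventually.of_forall fun ω =>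
    (integrable_layer (X ω)).mul_prod (integrable_layer (D ω)), ?_⟩
  refine hXD.norm.congr (Filter.Eventually.of_forall fun ω => ?_)
  simp only [norm_mul]
  rw [integral_prod_mul (fun s => ‖layer (X ω) s‖) (fun s => ‖layer (D ω) s‖),
    integral_abs_layer, integral_abs_layer, Real.norm_eq_abs, Real.norm_eq_abs]

/-- Hoeffding's representation of `E[X D]` as an integral over pairs of levels. -/
lemma integral_mul_eq_layer (P : Measure Ω) [IsProbabilityMeasure P] (X D : Ω → ℝ)
    (hX : Measurable X) (hD : Measurable D) (hXD : Integrable (fun ω => X ω * D ω) P) :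
    ∫ ω, X ω * D ω ∂P =
      ∫ q : ℝ × ℝ, ∫ ω, layer (X ω) q.1 * layer (D ω) q.2 ∂P ∂(volume.prod volume) := by
  rw [← integral_integral_swap
    (f := fun ω (q : ℝ × ℝ) => layer (X ω) q.1 * layer (D ω) q.2)
    (integrable_layer_mul P X D hX hD hXD)]
  refine integral_congr_ae (Filter.Eventually.of_forall fun ω => ?_)
  simp only
  rw [integral_prod_mul, integral_layer, integral_layer]
  ring

/-- The inner integral in `integral_mul_eq_layer` depends only on the marginal laws and on the joint
distribution function. -/
lemma integral_layer_mul (P : Measure Ω) [IsProbabilityMeasure P] (X D : Ω → ℝ)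
    (hX : Measurable X) (hD : Measurable D) (s t : ℝ) :
    ∫ ω, layer (X ω) s * layer (D ω) t ∂P =
      P.real ({ω | X ω ≤ s} ∩ {ω | D ω ≤ t})
        - (if 0 ≤ t then 1 else 0) * P.real {ω | X ω ≤ s}
        - (if 0 ≤ s then 1 else 0) * P.real {ω | D ω ≤ t}
        + (if 0 ≤ s then 1 else 0) * (if 0 ≤ t then 1 else 0) := by
  have hA : MeasurableSet {ω | X ω ≤ s} := measurableSet_le hX measurable_const
  have hB : MeasurableSet {ω | D ω ≤ t} := measurableSet_le hD measurable_const
  have hi : ∀ S : Set Ω, MeasurableSet S → Integrable (S.indicator fun _ => (1 : ℝ)) P :=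
    fun S hS => (integrable_const 1).indicator hS
  have hI : ∀ S : Set Ω, MeasurableSet S → ∫ ω, S.indicator (fun _ => (1 : ℝ)) ω ∂P = P.real S :=
    fun S hS => by rw [integral_indicator_const _ hS, smul_eq_mul, mul_one]
  set cs : ℝ := if 0 ≤ s then 1 else 0 with hcs
  set ct : ℝ := if 0 ≤ t then 1 else 0 with hct
  have hpt : ∀ ω, layer (X ω) s * layer (D ω) t =
      ({ω | X ω ≤ s} ∩ {ω | D ω ≤ t}).indicator (fun _ => (1 : ℝ)) ω
        - ct * {ω | X ω ≤ s}.indicator (fun _ => (1 : ℝ)) ω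
        - cs * {ω | D ω ≤ t}.indicator (fun _ => (1 : ℝ)) ω + cs * ct := by
    intro ω
    simp only [layer, indicator_apply, mem_inter_iff, mem_ofPred_eq, ← hcs, ← hct]
    by_cases h1 : X ω ≤ s <;> by_cases h2 : D ω ≤ t <;> simp [h1, h2] <;> ring
  simp only [hpt]
  have e0 := hi _ (hA.inter hB)
  have e1 := (hi _ hA).const_mul ct
  have e2 := (hi _ hB).const_mul cs
  have e01 : Integrable (fun ω =>
      ({ω | X ω ≤ s} ∩ {ω | D ω ≤ t}).indicator (fun _ => (1 : ℝ)) ω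
        - ct * {ω | X ω ≤ s}.indicator (fun _ => (1 : ℝ)) ω) P := e0.sub e1
  have e012 : Integrable (fun ω =>
      ({ω | X ω ≤ s} ∩ {ω | D ω ≤ t}).indicator (fun _ => (1 : ℝ)) ω
        - ct * {ω | X ω ≤ s}.indicator (fun _ => (1 : ℝ)) ω
        - cs * {ω | D ω ≤ t}.indicator (fun _ => (1 : ℝ)) ω) P := e01.sub e2
  rw [integral_add e012 (integrable_const _), integral_sub e01 e2, integral_sub e0 e1,
    integral_const_mul, integral_const_mul, hI _ (hA.inter hB), hI _ hA, hI _ hB]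
  simp

/-- Replacing `X` by a variable of the same law with a smaller joint distribution function with `D`
lowers `E[X D]`. -/
lemma integral_mul_le_of_joint_le (P : Measure Ω) [IsProbabilityMeasure P] (X Y D : Ω → ℝ)
    (hX : Measurable X) (hY : Measurable Y) (hD : Measurable D) (hlaw : SameLaw P Y X)
    (hXD : Integrable (fun ω => X ω * D ω) P) (hYD : Integrable (fun ω => Y ω * D ω) P)
    (hle : ∀ s t : ℝ, P ({ω | Y ω ≤ s} ∩ {ω | D ω ≤ t}) ≤ P ({ω | X ω ≤ s} ∩ {ω | D ω ≤ t})) :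
    ∫ ω, Y ω * D ω ∂P ≤ ∫ ω, X ω * D ω ∂P := by
  rw [integral_mul_eq_layer P X D hX hD hXD, integral_mul_eq_layer P Y D hY hD hYD]
  refine integral_mono (integrable_layer_mul P Y D hY hD hYD).integral_prod_right
    (integrable_layer_mul P X D hX hD hXD).integral_prod_right fun q => ?_
  simp only
  rw [integral_layer_mul P X D hX hD, integral_layer_mul P Y D hY hD]
  have h1 : P.real {ω | Y ω ≤ q.1} = P.real {ω | X ω ≤ q.1} := by
    have := congrArg (fun μ : Measure ℝ => μ.real (Iic q.1)) hlaw
    simp only [map_measureReal_apply hY measurableSet_Iic,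
      map_measureReal_apply hX measurableSet_Iic] at this
    exact this
  have h2 : P.real ({ω | Y ω ≤ q.1} ∩ {ω | D ω ≤ q.2}) ≤
      P.real ({ω | X ω ≤ q.1} ∩ {ω | D ω ≤ q.2}) :=
    ENNReal.toReal_mono (measure_ne_top _ _) (hle q.1 q.2)
  rw [h1]
  linarith

/-! ### Antimonotone rearrangement and optimality -/

lemma exists_antimonotone_rearrangement (P : Measure Ω) [IsProbabilityMeasure P]
    (hP : IsAtomless P) (X D : Ω → ℝ) (hX : Measurable X) (hD : Measurable D) :
    ∃ Y : Ω → ℝ, Measurable Y ∧ SameLaw P Y X ∧ Antimonotone P Y D := by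
  obtain ⟨W, hWm, hW0, hWD⟩ := exists_noAtoms_refinement P hP D hD
  have hnW0 : ∀ w, P {ω | -W ω = w} = 0 := fun w => by
    simpa only [neg_eq_iff_eq_neg] using hW0 (-w)
  obtain ⟨Y, hYm, hlaw, N, hN, hmono⟩ :=
    exists_rearrangement P (fun ω => -W ω) X hWm.neg hnW0 hX
  refine ⟨Y, hYm, hlaw, fun x y => ?_⟩
  refine measure_inter_eq_of_nested P (fun ω => -W ω) _ _ N
    (measurableSet_le hD measurable_const) hN ?_ ?_
  · intro ω hω ω' hω' h (hA : Y ω' ≤ x)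
    exact (hmono ω hω ω' hω' h).trans hA
  · intro ω _ ω' _ h (hB : D ω ≤ y)
    have hle : D ω' ≤ D ω := not_lt.1 fun hlt => by
      have := hWD _ _ hlt
      linarith
    exact hle.trans hB

/-- Antimonotone variables attain the lower Fréchet bound for the joint distribution function. -/
lemma Antimonotone.joint_le {P : Measure Ω} [IsProbabilityMeasure P] {X Y D : Ω → ℝ}
    (hX : Measurable X) (hY : Measurable Y) (hD : Measurable D) (hlaw : SameLaw P Y X)
    (h : Antimonotone P Y D) (s t : ℝ) :
    P ({ω | Y ω ≤ s} ∩ {ω | D ω ≤ t}) ≤ P ({ω | X ω ≤ s} ∩ {ω | D ω ≤ t}) := by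
  have h1 : P {ω | Y ω ≤ s} = P {ω | X ω ≤ s} := by
    have := congrArg (fun μ : Measure ℝ => μ (Iic s)) hlaw
    simp only [Measure.map_apply hY measurableSet_Iic,
      Measure.map_apply hX measurableSet_Iic] at this
    exact this
  rw [h s t, h1, tsub_le_iff_left,
    ← measure_union_add_inter {ω | X ω ≤ s} (measurableSet_le hD measurable_const)]
  gcongr
  exact prob_le_one

lemma Antimonotone.add_const {P : Measure Ω} {Y D : Ω → ℝ} (h : Antimonotone P Y D) (m : ℝ) :
    Antimonotone P (fun ω => Y ω + m) D := fun x y => by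
  simpa only [← le_sub_iff_add_le] using h (x - m) y

/-- if `C` is increasing and `φ` is weakly increasing, a feasible problem
admits an optimal solution that is antimonotone with the pricing density `D`. -/
theorem exists_antimonotone_optimal
    (P : Measure Ω) [IsProbabilityMeasure P] (hP : IsAtomless P)
    (pr : PairedSpaces P) (φ : (Ω → ℝ) → EReal) (C : Set (Ω → ℝ)) (D : Ω → ℝ) (p : ℝ)
    (hφlaw : LawInvariantFn P pr.carrier φ)
    (hCsub : C ⊆ pr.carrier) (hClaw : LawInvariantSet P C)
    (hD : D ∈ pr.dual) (hED : 0 < ∫ ω, D ω ∂P)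
    (hfeas : ∃ X, IsOptimal P φ C D p X)
    (hCinc : IncreasingSet C) (hφinc : WeaklyIncreasingFn pr.carrier φ) :
    ∃ X, IsOptimal P φ C D p X ∧ Antimonotone P X D := by
  obtain ⟨X, hXC, hXp, hXopt⟩ := hfeas
  have hXm := pr.meas_carrier X (hCsub hXC)
  have hDm := pr.meas_dual D hD
  obtain ⟨Y, hYm, hlaw, hanti⟩ := exists_antimonotone_rearrangement P hP X D hXm hDm
  have hYC : Y ∈ C := hClaw X hXC Y hYm hlaw
  have hXD := pr.mul_int X (hCsub hXC) D hD
  have hYD := pr.mul_int Y (hCsub hYC) D hD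
  have hle : ∫ ω, D ω * Y ω ∂P ≤ p := by
    rw [← hXp]
    simpa only [mul_comm] using integral_mul_le_of_joint_le P X Y D hXm hYm hDm hlaw hXD hYD
      (hanti.joint_le hXm hYm hDm hlaw)
  have hYD' : Integrable (fun ω => D ω * Y ω) P := by simpa only [mul_comm] using hYD
  set m : ℝ := (p - ∫ ω, D ω * Y ω ∂P) / ∫ ω, D ω ∂P with hm
  have hm0 : 0 ≤ m := div_nonneg (sub_nonneg.2 hle) hED.le
  refine ⟨fun ω => Y ω + m, ⟨hCinc Y hYC m hm0, ?_, fun X' hX' hX'p => ?_⟩, hanti.add_const m⟩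
  · simp only [mul_add]
    rw [integral_add hYD' ((pr.int_dual D hD).mul_const m), integral_mul_const, hm,
      mul_div_cancel₀ _ hED.ne']
    ring
  · calc φ X' ≤ φ X := hXopt X' hX' hX'p
      _ = φ Y := (hφlaw Y (hCsub hYC) X (hCsub hXC) hlaw).symm
      _ ≤ _ := hφinc Y (hCsub hYC) m hm0

end Collapse
end
end

section
/- Let (φ, C, D, p) be a feasible quadruple. If C is increasing, φ is increasing, and the optimal value Max(φ, C, D, p) is finite, then every optimal solution of the problem (maximize φ(X) over X ∈ C with E[DX] = p) is antimonotone with D. -/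
/-!
Suppose an optimal `X` is not antimonotone with `D`. Then for some levels `x`, `y` both events
`{X ≤ x, D ≤ y}` and `{X > x, D > y}` have positive probability
(`exists_of_not_antimonotone`). Choose subevents `A`, `B` of these of equal positive probability
and let `Y` agree with `X` off `A ∪ B`, have on `A` the law of `X` on `B`, and on `B` the law of
`X` on `A`. Then `Y` has the law of `X`, and `(D - y) (X - Y)` is nonnegative, and strictly
positive on `B`; since `E[Y] = E[X]`, integrating gives `E[D Y] < E[D X]` (`exists_cheaper`).
The money saved buys a sure gain `m > 0`: the random variable `Y + m` lies in `C`, has price `p`,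
and `φ (Y + m) > φ Y = φ X`, because the optimal value is finite. This contradicts optimality.

The rearrangement `Y` requires random variables of prescribed law on a given event. An atomless
probability space carries nested events of every probability in `[0, 1]` (`exists_nested`, by
Zorn's lemma), hence a uniform random variable (`exists_uniform`), hence one of any law on `ℝ`.
This is applied to the conditional measures on `A` and `B`, which are again atomless.
-/

open MeasureTheory Set List
open scoped ENNReal NNReal

noncomputable section

namespace Collapse

variable {Ω : Type*} [MeasurableSpace Ω]

/-! ### A uniform random variable on an atomless probability space -/

/-- A family of measurable sets that is totally ordered by inclusion and on which the measure is
injective, both encoded in the single implication `μ A ≤ μ B → A ⊆ B`. -/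
structure IsFlag (μ : Measure Ω) (c : Set (Set Ω)) : Prop where
  meas : ∀ A ∈ c, MeasurableSet A
  sub : ∀ A ∈ c, ∀ B ∈ c, μ.real A ≤ μ.real B → A ⊆ B

/-- The members of a flag of measure less than `t` have a measurable union `S`, of measure at most
`t`, although the flag may be uncountable. -/
lemma IsFlag.exists_lower {μ : Measure Ω} [IsProbabilityMeasure μ] {c : Set (Set Ω)}
    (hc : IsFlag μ c) {t : ℝ} (ht : 0 ≤ t) :
    ∃ S : Set Ω, MeasurableSet S ∧ μ.real S ≤ t ∧
      (∀ E ∈ c, μ.real E < t → E ⊆ S) ∧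
      (∀ W : Set Ω, (∀ E ∈ c, μ.real E < t → E ⊆ W) → S ⊆ W) := by
  by_cases hmax : ∃ E ∈ c, μ.real E < t ∧ ∀ E' ∈ c, μ.real E' < t → μ.real E' ≤ μ.real E
  · obtain ⟨E, hE, hEt, hEmax⟩ := hmax
    refine ⟨E, hc.meas E hE, hEt.le, fun E' hE' hlt => ?_, fun W hW =>
      hW E hE hEt⟩
    exact hc.sub _ hE' _ hE (hEmax E' hE' hlt)
  · push Not at hmax
    -- Without a largest member below `t`, the union of one member of measure in `(q, t)` for
    -- each rational `q` is a countable union that absorbs all of them.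
    let J := {q : ℚ // ∃ E ∈ c, (q : ℝ) < μ.real E ∧ μ.real E < t}
    choose F hFc hFq hFt using fun j : J => j.2
    have hdir : Directed (· ⊆ ·) F := by
      intro i j
      rcases le_total (μ.real (F i)) (μ.real (F j)) with h | h
      · exact ⟨j, hc.sub _ (hFc i) _ (hFc j) h, subset_rfl⟩
      · exact ⟨i, subset_rfl, hc.sub _ (hFc j) _ (hFc i) h⟩
    refine ⟨⋃ j, F j, MeasurableSet.iUnion fun j => hc.meas _ (hFc j), ?_, ?_, ?_⟩
    · rw [measureReal_def, hdir.measure_iUnion]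
      refine ENNReal.toReal_le_of_le_ofReal ht (iSup_le fun j => ?_)
      rw [← ENNReal.ofReal_toReal (measure_ne_top μ (F j))]
      exact ENNReal.ofReal_le_ofReal (hFt j).le
    · intro E hE hEt
      obtain ⟨E', hE', hE't, hlt⟩ := hmax E hE hEt
      obtain ⟨q, hq1, hq2⟩ := exists_rat_btwn hlt
      let j : J := ⟨q, E', hE', hq2, hE't⟩
      have hj : μ.real E < μ.real (F j) := hq1.trans (hFq j)
      exact (hc.sub _ hE _ (hFc j) hj.le).trans (subset_iUnion F j)
    · intro W hW
      exact iUnion_subset fun j => hW _ (hFc j) (hFt j)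

/-- The members of a flag of measure greater than `t` have a measurable intersection `T`, of
measure at least `t`: this is `IsFlag.exists_lower` for the complements. -/
lemma IsFlag.exists_upper {μ : Measure Ω} [IsProbabilityMeasure μ] {c : Set (Set Ω)}
    (hc : IsFlag μ c) {t : ℝ} (ht : t ≤ 1) :
    ∃ T : Set Ω, MeasurableSet T ∧ t ≤ μ.real T ∧
      (∀ E ∈ c, t < μ.real E → T ⊆ E) ∧
      (∀ W : Set Ω, (∀ E ∈ c, t < μ.real E → W ⊆ E) → W ⊆ T) := by
  have hc' : IsFlag μ (compl '' c) := by
    constructor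
    · rintro _ ⟨A, hA, rfl⟩
      exact (hc.meas A hA).compl
    · rintro _ ⟨A, hA, rfl⟩ _ ⟨B, hB, rfl⟩ h
      rw [probReal_compl_eq_one_sub (hc.meas A hA), probReal_compl_eq_one_sub (hc.meas B hB)] at h
      exact compl_subset_compl.2 (hc.sub _ hB _ hA (by linarith))
  obtain ⟨S, hS, hSt, h1, h2⟩ := hc'.exists_lower (t := 1 - t) (by linarith)
  have hSc := probReal_compl_eq_one_sub (μ := μ) hS
  refine ⟨Sᶜ, hS.compl, by linarith, fun E hE hEt => ?_, fun W hW => ?_⟩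
  · have hEc := probReal_compl_eq_one_sub (μ := μ) (hc.meas E hE)
    exact compl_subset_comm.1 (h1 Eᶜ ⟨E, hE, rfl⟩ (by linarith))
  · refine subset_compl_comm.1 (h2 Wᶜ ?_)
    rintro _ ⟨E, hE, rfl⟩ hEt
    have hEc := probReal_compl_eq_one_sub (μ := μ) (hc.meas E hE)
    exact compl_subset_compl.2 (hW E hE (by linarith))

/-- A maximal flag of an atomless probability measure contains a set of every measure in
`[0, 1]`: a missing value would leave a gap `S ⊆ T` into which a further set can be inserted. -/
lemma exists_nested (μ : Measure Ω) [IsProbabilityMeasure μ] (hμ : IsAtomless μ) :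
    ∃ B : unitInterval → Set Ω, (∀ t, MeasurableSet (B t)) ∧ Monotone B ∧
      ∀ t, μ.real (B t) = t := by
  obtain ⟨c, hcmax⟩ : ∃ c, Maximal (· ∈ {c | IsFlag μ c}) c := by
    refine zorn_subset _ fun 𝒞 h𝒞 hchain => ⟨⋃₀ 𝒞, ⟨?_, ?_⟩, fun s hs => subset_sUnion_of_mem hs⟩
    · rintro A ⟨s, hs, hA⟩
      exact (h𝒞 hs).meas A hA
    · rintro A ⟨s, hs, hA⟩ B ⟨s', hs', hB⟩ h
      rcases hchain.total hs hs' with hss | hss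
      · exact (h𝒞 hs').sub A (hss hA) B hB h
      · exact (h𝒞 hs).sub A hA B (hss hB) h
  have hc : IsFlag μ c := hcmax.prop
  have key : ∀ t : unitInterval, ∃ A ∈ c, μ.real A = t := by
    intro t
    by_contra hne
    push Not at hne
    obtain ⟨S, hS, hSt, hS1, hSmin⟩ := hc.exists_lower t.2.1
    obtain ⟨T, hT, hTt, hT1, hTmax⟩ := hc.exists_upper t.2.2
    have hS2 : ∀ E ∈ c, t < μ.real E → S ⊆ E := fun E hE h =>
      hSmin E fun E' hE' h' => hc.sub _ hE' _ hE (h'.trans h).le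
    have hT2 : ∀ E ∈ c, μ.real E < t → E ⊆ T := fun E hE h =>
      hTmax E fun E' hE' h' => hc.sub _ hE _ hE' (h.trans h').le
    have hST : S ⊆ T := hSmin T hT2
    -- Any set that sits strictly between the members below and above level `t` is in the flag.
    have hins : ∀ Z, MeasurableSet Z →
        (∀ E ∈ c, μ.real E < t → E ⊆ Z ∧ μ.real E < μ.real Z) →
        (∀ E ∈ c, t < μ.real E → Z ⊆ E ∧ μ.real Z < μ.real E) → Z ∈ c := by
      intro Z hZ hlow hup
      have hflag : IsFlag μ (insert Z c) := by
        constructor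
        · rintro A (rfl | hA)
          · exact hZ
          · exact hc.meas A hA
        · rintro A (rfl | hA) B (rfl | hB) h
          · exact subset_rfl
          · rcases (hne B hB).lt_or_gt with h' | h'
            · linarith [(hlow B hB h').2]
            · exact (hup B hB h').1
          · rcases (hne A hA).lt_or_gt with h' | h'
            · exact (hlow A hA h').1
            · linarith [(hup A hA h').2]
          · exact hc.sub A hA B hB h
      exact hcmax.le_of_ge hflag (subset_insert Z c) (mem_insert Z c)
    rcases hSt.lt_or_eq with hSt | hSt
    swap
    · refine hne S (hins S hS (fun E hE h => ⟨hS1 E hE h, by linarith⟩)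
        (fun E hE h => ⟨hS2 E hE h, by linarith⟩)) hSt
    rcases hTt.lt_or_eq with hTt | hTt
    swap
    · refine hne T (hins T hT (fun E hE h => ⟨hT2 E hE h, by linarith⟩)
        (fun E hE h => ⟨hT1 E hE h, by linarith⟩)) hTt.symm
    have hTS : μ.real (T \ S) = μ.real T - μ.real S := measureReal_sdiff hST hS
    have hdiff : 0 < μ (T \ S) := by
      refine pos_iff_ne_zero.2 fun h0 => ?_
      rw [measureReal_def, h0, ENNReal.toReal_zero] at hTS
      linarith
    obtain ⟨B, hB, hBsub, hB0, hBlt⟩ := hμ _ (hT.diff hS) hdiff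
    have hm : μ.real (S ∪ B) = μ.real S + μ.real B :=
      measureReal_union (disjoint_of_subset_right hBsub disjoint_sdiff_right) hB
    have hB0' : 0 < μ.real B := ENNReal.toReal_pos hB0.ne' (measure_ne_top _ _)
    have hBlt' : μ.real B < μ.real (T \ S) :=
      (ENNReal.toReal_lt_toReal (measure_ne_top _ _) (measure_ne_top _ _)).2 hBlt
    have hSB : S ∪ B ∈ c := by
      refine hins _ (hS.union hB) (fun E hE h => ?_) (fun E hE h => ?_)
      · have hES := hS1 E hE h
        have := measureReal_mono (μ := μ) hES
        exact ⟨hES.trans subset_union_left, by linarith⟩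
      · have hTE := hT1 E hE h
        have := measureReal_mono (μ := μ) hTE
        exact ⟨(union_subset hST (hBsub.trans sdiff_subset)).trans hTE, by linarith⟩
    rcases (hne _ hSB).lt_or_gt with h | h
    · have := measureReal_mono (μ := μ) (hS1 _ hSB h)
      linarith
    · have := measureReal_mono (μ := μ) (hT1 _ hSB h)
      linarith
  choose B hBc hBt using key
  exact ⟨B, fun t => hc.meas _ (hBc t),
    fun s t hst => hc.sub _ (hBc s) _ (hBc t) (by rw [hBt, hBt]; exact hst), hBt⟩

/-- An atomless probability space carries a uniform random variable `U`: for nested sets `B t` of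
measure `t`, take `U ω = inf {t | ω ∈ B t}`. -/
lemma exists_uniform (μ : Measure Ω) [IsProbabilityMeasure μ] (hμ : IsAtomless μ) :
    ∃ U : Ω → unitInterval, Measurable U ∧ Measure.map U μ = volume := by
  obtain ⟨B, hBm, hBmono, hBt⟩ := exists_nested μ hμ
  let U : Ω → unitInterval := fun ω => sInf {q | ω ∈ B q}
  have hlt : ∀ t, MeasurableSet (U ⁻¹' Iio t) ∧ μ (U ⁻¹' Iio t) = ENNReal.ofReal t := by
    intro t
    have hset : U ⁻¹' Iio t = {ω | ∃ q, ω ∈ B q ∧ q < t} := by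
      ext ω
      simp [U, sInf_lt_iff]
    rcases eq_or_ne t 0 with rfl | ht
    · simp
    · obtain ⟨u, humono, hut, hulim⟩ :=
        exists_seq_strictMono_tendsto' (x := t) (y := 0) (unitInterval.pos_iff_ne_zero.2 ht)
      have hU : U ⁻¹' Iio t = ⋃ n, B (u n) := by
        rw [hset]
        ext ω
        simp only [mem_ofPred_eq, mem_iUnion]
        constructor
        · rintro ⟨q, hq, hqt⟩
          obtain ⟨n, hn⟩ := (hulim.eventually (lt_mem_nhds hqt)).exists
          exact ⟨n, hBmono hn.le hq⟩
        · rintro ⟨n, hn⟩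
          exact ⟨u n, hn, (hut n).2⟩
      refine ⟨hU ▸ MeasurableSet.iUnion fun n => hBm _, ?_⟩
      rw [hU]
      have h1 := tendsto_measure_iUnion_atTop (μ := μ) (hBmono.comp humono.monotone)
      have h2 : Filter.Tendsto (fun n => ENNReal.ofReal (u n : ℝ)) Filter.atTop
          (nhds (ENNReal.ofReal t)) :=
        ENNReal.tendsto_ofReal ((continuous_subtype_val.tendsto t).comp hulim)
      refine tendsto_nhds_unique h1 (h2.congr fun n => ?_)
      rw [← hBt (u n), measureReal_def, ENNReal.ofReal_toReal (measure_ne_top _ _)]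
      rfl
  have hUm : Measurable U := measurable_of_Iio fun t => (hlt t).1
  refine ⟨U, hUm, ?_⟩
  have := Measure.isProbabilityMeasure_map (μ := μ) hUm.aemeasurable
  refine Measure.ext_of_Ici _ _ fun t => ?_
  rw [← compl_Iio, prob_compl_eq_one_sub measurableSet_Iio,
    prob_compl_eq_one_sub measurableSet_Iio, Measure.map_apply hUm measurableSet_Iio, (hlt t).2,
    unitInterval.volume_Iio]

lemma exists_map_eq (μ : Measure Ω) [IsProbabilityMeasure μ] (hμ : IsAtomless μ)
    (ν : Measure ℝ) [IsProbabilityMeasure ν] :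
    ∃ Z : Ω → ℝ, Measurable Z ∧ Measure.map Z μ = ν := by
  obtain ⟨U, hU, hUmap⟩ := exists_uniform μ hμ
  obtain ⟨f, hf, hfmap⟩ := ν.exists_measurable_map_eq
  exact ⟨f ∘ U, hf.comp hU, by rw [← Measure.map_map hf hU, hUmap, hfmap]⟩

/-! ### Conditioning on an event -/

lemma IsAtomless.cond {P : Measure Ω} [IsProbabilityMeasure P] (hP : IsAtomless P) {A : Set Ω}
    (hA : MeasurableSet A) (hA0 : P A ≠ 0) : IsAtomless (ProbabilityTheory.cond P A) := by
  intro E hE hE0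
  rw [ProbabilityTheory.cond_apply hA] at hE0
  have hinv : (P A)⁻¹ ≠ 0 := ENNReal.inv_ne_zero.2 (measure_ne_top _ _)
  obtain ⟨B, hB, hBsub, hB0, hBlt⟩ := hP (A ∩ E) (hA.inter hE)
    (pos_iff_ne_zero.2 (right_ne_zero_of_mul hE0.ne'))
  have hAB : A ∩ B = B := inter_eq_right.2 (hBsub.trans inter_subset_left)
  refine ⟨B, hB, hBsub.trans inter_subset_right, ?_, ?_⟩
  · rw [ProbabilityTheory.cond_apply hA, hAB]
    exact ENNReal.mul_pos hinv hB0.ne'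
  · rw [ProbabilityTheory.cond_apply hA, ProbabilityTheory.cond_apply hA, hAB]
    exact (ENNReal.mul_lt_mul_iff_right hinv (ENNReal.inv_ne_top.2 hA0)).2 hBlt

lemma restrict_eq_smul_cond (P : Measure Ω) [IsProbabilityMeasure P] {A : Set Ω}
    (hA0 : P A ≠ 0) : P.restrict A = P A • ProbabilityTheory.cond P A := by
  rw [ProbabilityTheory.cond, smul_smul, ENNReal.mul_inv_cancel hA0 (measure_ne_top _ _), one_smul]

lemma exists_subset_measure_eq {P : Measure Ω} [IsProbabilityMeasure P] (hP : IsAtomless P)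
    {A : Set Ω} (hA : MeasurableSet A) (hA0 : P A ≠ 0) {s : ℝ≥0∞} (hs : s ≤ P A) :
    ∃ B ⊆ A, MeasurableSet B ∧ P B = s := by
  have := ProbabilityTheory.cond_isProbabilityMeasure hA0
  obtain ⟨B, hBm, -, hBt⟩ := exists_nested _ (hP.cond hA hA0)
  have hle : s / P A ≤ 1 := ENNReal.div_le_of_le_mul (by simpa using hs)
  let t : unitInterval := ⟨(s / P A).toReal, ENNReal.toReal_nonneg,
    ENNReal.toReal_le_of_le_ofReal zero_le_one (by simpa using hle)⟩
  refine ⟨A ∩ B t, inter_subset_left, hA.inter (hBm t), ?_⟩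
  have h1 : ProbabilityTheory.cond P A (B t) = s / P A := by
    rw [← ENNReal.toReal_eq_toReal_iff' (measure_ne_top _ _) (ne_top_of_le_ne_top
      ENNReal.one_ne_top hle)]
    exact hBt t
  rw [← ProbabilityTheory.cond_mul_eq_inter hA, h1,
    ENNReal.div_mul_cancel hA0 (measure_ne_top _ _)]

lemma exists_map_restrict_eq {P : Measure Ω} [IsProbabilityMeasure P] (hP : IsAtomless P)
    {A B : Set Ω} (hA : MeasurableSet A) (hA0 : P A ≠ 0) (hAB : P A = P B)
    {X : Ω → ℝ} (hX : Measurable X) :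
    ∃ Z : Ω → ℝ, Measurable Z ∧
      Measure.map Z (P.restrict A) = Measure.map X (P.restrict B) := by
  have hB0 : P B ≠ 0 := hAB ▸ hA0
  have := ProbabilityTheory.cond_isProbabilityMeasure hA0
  have := ProbabilityTheory.cond_isProbabilityMeasure hB0
  have := Measure.isProbabilityMeasure_map (μ := ProbabilityTheory.cond P B) hX.aemeasurable
  obtain ⟨Z, hZ, hZmap⟩ := exists_map_eq _ (hP.cond hA hA0)
    (Measure.map X (ProbabilityTheory.cond P B))
  refine ⟨Z, hZ, ?_⟩
  rw [restrict_eq_smul_cond P hA0, restrict_eq_smul_cond P hB0, Measure.map_smul,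
    Measure.map_smul, hZmap, hAB]

/-! ### Rearranging a random variable that is not antimonotone with `D` -/

/-- The law of `X` is unchanged when its values on two disjoint events `A`, `B` are replaced by
random variables whose laws on `A` and `B` are those of `X` on `B` and `A`. -/
lemma sameLaw_swap {P : Measure Ω} {A B : Set Ω} [∀ ω, Decidable (ω ∈ A)]
    [∀ ω, Decidable (ω ∈ B)] (hA : MeasurableSet A) (hB : MeasurableSet B)
    (hdisj : Disjoint A B) {X Z W : Ω → ℝ} (hX : Measurable X) (hZ : Measurable Z)
    (hW : Measurable W)
    (hZmap : Measure.map Z (P.restrict A) = Measure.map X (P.restrict B))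
    (hWmap : Measure.map W (P.restrict B) = Measure.map X (P.restrict A)) :
    SameLaw P (A.piecewise Z (B.piecewise W X)) X := by
  have hY : Measurable (A.piecewise Z (B.piecewise W X)) := hZ.piecewise hA (hW.piecewise hB hX)
  have hsplit : P = P.restrict A + P.restrict B + P.restrict (A ∪ B)ᶜ := by
    rw [← Measure.restrict_union hdisj hB, Measure.restrict_add_restrict_compl (hA.union hB)]
  have h1 : Measure.map (A.piecewise Z (B.piecewise W X)) (P.restrict A)
      = Measure.map Z (P.restrict A) := by
    refine Measure.map_congr ?_
    filter_upwards [ae_restrict_mem hA] with ω hω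
    simp [hω]
  have h2 : Measure.map (A.piecewise Z (B.piecewise W X)) (P.restrict B)
      = Measure.map W (P.restrict B) := by
    refine Measure.map_congr ?_
    filter_upwards [ae_restrict_mem hB] with ω hω
    simp [hω, Set.disjoint_right.1 hdisj hω]
  have h3 : Measure.map (A.piecewise Z (B.piecewise W X)) (P.restrict (A ∪ B)ᶜ)
      = Measure.map X (P.restrict (A ∪ B)ᶜ) := by
    refine Measure.map_congr ?_
    filter_upwards [ae_restrict_mem (hA.union hB).compl] with ω hω
    simp only [mem_compl_iff, mem_union, not_or] at hω
    simp [hω]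
  unfold SameLaw
  conv_lhs => rw [hsplit]
  conv_rhs => rw [hsplit]
  rw [Measure.map_add _ _ hY, Measure.map_add _ _ hY, Measure.map_add _ _ hX,
    Measure.map_add _ _ hX, h1, h2, h3, hZmap, hWmap,
    add_comm (Measure.map X (P.restrict B))]

/-- If `X` and `D` are not antimonotone, then with positive probability both are small, and with
positive probability both are large. -/
lemma exists_of_not_antimonotone {P : Measure Ω} [IsProbabilityMeasure P] {X D : Ω → ℝ}
    (hX : Measurable X) (hD : Measurable D) (h : ¬ Antimonotone P X D) :
    ∃ x y : ℝ, P ({ω | X ω ≤ x} ∩ {ω | D ω ≤ y}) ≠ 0 ∧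
      P ({ω | x < X ω} ∩ {ω | y < D ω}) ≠ 0 := by
  unfold Antimonotone at h
  push Not at h
  obtain ⟨x, y, hxy⟩ := h
  have hmX : MeasurableSet {ω | X ω ≤ x} := measurableSet_le hX measurable_const
  have hmD : MeasurableSet {ω | D ω ≤ y} := measurableSet_le hD measurable_const
  have hsum := measure_union_add_inter (μ := P) {ω | X ω ≤ x} hmD
  refine ⟨x, y, fun h0 => hxy ?_, fun h0 => hxy ?_⟩
  · rw [h0, add_zero] at hsum
    rw [← hsum, h0, eq_comm, tsub_eq_zero_iff_le]
    exact prob_le_one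
  · have hc : {ω | x < X ω} ∩ {ω | y < D ω} = ({ω | X ω ≤ x} ∪ {ω | D ω ≤ y})ᶜ := by
      ext ω
      simp
    rw [hc, prob_compl_eq_zero_iff (hmX.union hmD)] at h0
    rw [← hsum, h0, ENNReal.add_sub_cancel_left ENNReal.one_ne_top]

/-- A random variable that is not antimonotone with `D` can be rearranged so as to become strictly
cheaper under the pricing functional `E[D ·]`. -/
lemma exists_cheaper {P : Measure Ω} [IsProbabilityMeasure P] (hP : IsAtomless P)
    (pr : PairedSpaces P) {X D : Ω → ℝ} (hX : X ∈ pr.carrier) (hD : D ∈ pr.dual)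
    (h : ¬ Antimonotone P X D) :
    ∃ Y : Ω → ℝ, Measurable Y ∧ SameLaw P Y X ∧
      ∫ ω, D ω * Y ω ∂P < ∫ ω, D ω * X ω ∂P := by
  classical
  have hXm := pr.meas_carrier X hX
  have hDm := pr.meas_dual D hD
  obtain ⟨x, y, hA0, hB0⟩ := exists_of_not_antimonotone hXm hDm h
  set A₀ := {ω | X ω ≤ x} ∩ {ω | D ω ≤ y}
  set B₀ := {ω | x < X ω} ∩ {ω | y < D ω}
  have hA₀m : MeasurableSet A₀ :=
    (measurableSet_le hXm measurable_const).inter (measurableSet_le hDm measurable_const)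
  have hB₀m : MeasurableSet B₀ :=
    (measurableSet_lt measurable_const hXm).inter (measurableSet_lt measurable_const hDm)
  have hs0 : min (P A₀) (P B₀) ≠ 0 := by
    rw [← pos_iff_ne_zero] at hA0 hB0 ⊢
    exact lt_min hA0 hB0
  obtain ⟨A, hAA₀, hA, hPA⟩ := exists_subset_measure_eq hP hA₀m hA0 (min_le_left _ (P B₀))
  obtain ⟨B, hBB₀, hB, hPB⟩ := exists_subset_measure_eq hP hB₀m hB0 (min_le_right (P A₀) _)
  have hPA0 : P A ≠ 0 := hPA ▸ hs0
  have hPB0 : P B ≠ 0 := hPB ▸ hs0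
  have hdisj : Disjoint A B := by
    rw [Set.disjoint_left]
    intro ω hωA hωB
    have h1 : X ω ≤ x := (hAA₀ hωA).1
    have h2 : x < X ω := (hBB₀ hωB).1
    exact absurd h1 (not_le.2 h2)
  obtain ⟨Z, hZ, hZmap⟩ := exists_map_restrict_eq hP hA hPA0 (hPA.trans hPB.symm) hXm
  obtain ⟨W, hW, hWmap⟩ := exists_map_restrict_eq hP hB hPB0 (hPB.trans hPA.symm) hXm
  have hlaw := sameLaw_swap hA hB hdisj hXm hZ hW hZmap hWmap
  set Y := A.piecewise Z (B.piecewise W X) with hY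
  have hYm : Measurable Y := hZ.piecewise hA (hW.piecewise hB hXm)
  have hYc := pr.lawinv_carrier X hX Y hYm hlaw
  refine ⟨Y, hYm, hlaw, ?_⟩
  -- `Z` inherits from `X` on `B` the bound `x < ·`, and `W` inherits from `X` on `A` the
  -- bound `· ≤ x`.
  have hZx : ∀ᵐ ω ∂P, ω ∈ A → x < Z ω := by
    rw [← ae_restrict_iff' hA]
    refine ae_of_ae_map (p := fun z => x < z) hZ.aemeasurable ?_
    rw [hZmap, ae_map_iff hXm.aemeasurable measurableSet_Ioi]
    filter_upwards [ae_restrict_mem hB] with ω hω using (hBB₀ hω).1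
  have hWx : ∀ᵐ ω ∂P, ω ∈ B → W ω ≤ x := by
    rw [← ae_restrict_iff' hB]
    refine ae_of_ae_map (p := fun z => z ≤ x) hW.aemeasurable ?_
    rw [hWmap, ae_map_iff hXm.aemeasurable measurableSet_Iic]
    filter_upwards [ae_restrict_mem hA] with ω hω using (hAA₀ hω).1
  have hgain : ∀ᵐ ω ∂P, 0 ≤ (D ω - y) * (X ω - Y ω) ∧
      (ω ∈ B → 0 < (D ω - y) * (X ω - Y ω)) := by
    filter_upwards [hZx, hWx] with ω h1 h2
    by_cases hωA : ω ∈ A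
    · have hYω : Y ω = Z ω := by simp [hY, hωA]
      have hx : X ω ≤ x := (hAA₀ hωA).1
      have hd : D ω ≤ y := (hAA₀ hωA).2
      rw [hYω]
      refine ⟨mul_nonneg_of_nonpos_of_nonpos (by linarith) (by linarith [h1 hωA]), fun hωB => ?_⟩
      exact absurd hωB (Set.disjoint_left.1 hdisj hωA)
    · by_cases hωB : ω ∈ B
      · have hYω : Y ω = W ω := by simp [hY, hωA, hωB]
        have hx : x < X ω := (hBB₀ hωB).1
        have hd : y < D ω := (hBB₀ hωB).2
        have hpos : 0 < (D ω - y) * (X ω - Y ω) := by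
          rw [hYω]
          exact mul_pos (by linarith) (by linarith [h2 hωB])
        exact ⟨hpos.le, fun _ => hpos⟩
      · have hYω : Y ω = X ω := by simp [hY, hωA, hωB]
        exact ⟨by simp [hYω], fun h => absurd h hωB⟩
  have iX := pr.int_carrier X hX
  have iY := pr.int_carrier Y hYc
  have iDX : Integrable (fun ω => D ω * X ω) P := by
    simpa only [mul_comm] using pr.mul_int X hX D hD
  have iDY : Integrable (fun ω => D ω * Y ω) P := by
    simpa only [mul_comm] using pr.mul_int Y hYc D hD
  have hmean : ∫ ω, Y ω ∂P = ∫ ω, X ω ∂P :=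
    (ProbabilityTheory.IdentDistrib.mk hYm.aemeasurable hXm.aemeasurable hlaw).integral_eq
  have hexp : (fun ω => (D ω - y) * (X ω - Y ω))
      = fun ω => (D ω * X ω - D ω * Y ω) - y * (X ω - Y ω) := by
    funext ω
    ring
  have iG : Integrable (fun ω => (D ω - y) * (X ω - Y ω)) P := by
    rw [hexp]
    exact (iDX.sub iDY).sub ((iX.sub iY).const_mul y)
  have hval : ∫ ω, (D ω - y) * (X ω - Y ω) ∂P
      = ∫ ω, D ω * X ω ∂P - ∫ ω, D ω * Y ω ∂P := by
    have iDXY : Integrable (fun ω => D ω * X ω - D ω * Y ω) P := iDX.sub iDY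
    have iyXY : Integrable (fun ω => y * (X ω - Y ω)) P := (iX.sub iY).const_mul y
    rw [hexp, integral_sub iDXY iyXY, integral_sub iDX iDY, integral_const_mul,
      integral_sub iX iY, hmean]
    ring
  have hpos : 0 < ∫ ω, (D ω - y) * (X ω - Y ω) ∂P := by
    rw [integral_pos_iff_support_of_nonneg_ae (hgain.mono fun ω h => h.1) iG]
    refine (pos_iff_ne_zero.2 hPB0).trans_le (measure_mono_ae ?_)
    filter_upwards [hgain] with ω hω hωB
    exact (hω.2 hωB).ne'
  linarith

/-- if `C` is increasing, `φ` is increasing, and the optimal value is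
finite, every optimal solution is antimonotone with the pricing density `D`. -/
theorem all_optimal_antimonotone
    (P : Measure Ω) [IsProbabilityMeasure P] (hP : IsAtomless P)
    (pr : PairedSpaces P) (φ : (Ω → ℝ) → EReal) (C : Set (Ω → ℝ)) (D : Ω → ℝ) (p : ℝ)
    (hφlaw : LawInvariantFn P pr.carrier φ)
    (hCsub : C ⊆ pr.carrier) (hClaw : LawInvariantSet P C)
    (hD : D ∈ pr.dual) (hED : 0 < ∫ ω, D ω ∂P)
    (hfeas : ∃ X, IsOptimal P φ C D p X)
    (hCinc : IncreasingSet C) (hφinc : IncreasingFn pr.carrier φ)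
    (hMax : ∃ X, IsOptimal P φ C D p X ∧ φ X ≠ (⊤ : EReal) ∧ φ X ≠ (⊥ : EReal)) :
    ∀ X, IsOptimal P φ C D p X → Antimonotone P X D := by
  intro X hXopt
  obtain ⟨X₀, hX₀, hX₀fin⟩ := hMax
  have hXfin : φ X ≠ (⊤ : EReal) ∧ φ X ≠ (⊥ : EReal) := by
    rwa [(hX₀.2.2 X hXopt.1 hXopt.2.1).antisymm (hXopt.2.2 X₀ hX₀.1 hX₀.2.1)]
  obtain ⟨hXC, hXp, hXmax⟩ := hXopt
  by_contra hanti
  obtain ⟨Y, hYm, hlaw, hlt⟩ := exists_cheaper hP pr (hCsub hXC) hD hanti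
  have hYC : Y ∈ C := hClaw X hXC Y hYm hlaw
  have hφ : φ Y = φ X := hφlaw Y (hCsub hYC) X (hCsub hXC) hlaw
  -- The amount saved by the rearrangement buys the sure gain `m`.
  set m := (p - ∫ ω, D ω * Y ω ∂P) / ∫ ω, D ω ∂P with hm
  have hm0 : 0 < m := div_pos (by linarith) hED
  have iDY : Integrable (fun ω => D ω * Y ω) P := by
    simpa only [mul_comm] using pr.mul_int Y (hCsub hYC) D hD
  have hprice : ∫ ω, D ω * (Y ω + m) ∂P = p := by
    simp_rw [mul_add]
    rw [integral_add iDY ((pr.int_dual D hD).mul_const m), integral_mul_const, hm,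
      mul_div_cancel₀ _ hED.ne']
    ring
  have h1 := hXmax _ (hCinc Y hYC m hm0.le) hprice
  have h2 := hφinc Y (hCsub hYC) (hφ ▸ hXfin) m hm0
  exact absurd (h2.trans_le h1) (by rw [hφ]; exact lt_irrefl _)

end Collapse
end
end

section
/- For every nonconstant D ∈ X* with E[D] > 0, each of the following holds: (i) there exists a feasible quadruple (φ, C, D, p) with φ weakly increasing such that no optimal solution is antimonotone with D; (ii) there exists a feasible quadruple (φ, C, D, p) with C increasing such that no optimal solution is antimonotone with D; (iii) there exists a feasible quadruple (φ, C, D, p) with φ increasing and Max(φ, C, D, p) ∈ ℝ such that some optimal solution is not antimonotone with D; (iv) there exists a feasible quadruple (φ, C, D, p) with C increasing and Max(φ, C, D, p) ∈ ℝ such that some optimal solution is not antimonotone with D. -/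
/-!
All four quadruples are built from a single random variable. Put `t = E[D]`. As `D` is
nonconstant, `0 < P(D ≤ t) < 1` (`level_pos`). Let `X₀` be the indicator of `{D > t}` and
`p = E[D X₀]`. The Neyman-Pearson (bathtub) argument shows that among the variables with the law of
`X₀`, only `X₀` itself attains the expectation `p`, which is the largest possible. Hence every `X`
with the law of `X₀` and `E[D X] = p` vanishes a.s. on `{D ≤ t}`, and this violates the
antimonotonicity identity at the point `(0, t)` (`not_antimonotone_of_law`).

For (i) and (iii), `C` is the law class of `X₀`, and `φ` is `0`, respectively the expectation, so
every feasible point is optimal. For (ii) and (iv), `C` is the whole of `𝒳` and `φ` is the `0`-`1`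
indicator of that law class, so the optimal solutions are exactly the feasible points in the class.
-/

open MeasureTheory Set List
open scoped ENNReal NNReal

noncomputable section

namespace Collapse

variable {Ω : Type*} [MeasurableSpace Ω]

/-- The mean is a level that `D` lies strictly above, and weakly below, with positive
probability. -/
lemma level_pos (P : Measure Ω) [IsProbabilityMeasure P] (D : Ω → ℝ) (hm : Measurable D)
    (hi : Integrable D P) (hnc : Nonconstant P D) :
    P {ω | D ω ≤ ∫ ω, D ω ∂P} ≠ 0 ∧ P {ω | D ω ≤ ∫ ω, D ω ∂P} ≠ 1 := by
  set t := ∫ ω, D ω ∂P with ht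
  have hc : ∫ _, t ∂P = t := by simp
  constructor
  · intro h
    have hle : (fun _ => t) ≤ᵐ[P] D := by
      have : ∀ᵐ ω ∂P, ¬ D ω ≤ t := by simpa [ae_iff] using h
      filter_upwards [this] with ω hω using (not_le.mp hω).le
    exact hnc t ((integral_eq_iff_of_ae_le (integrable_const t) hi hle).1 (hc.trans ht)).symm
  · intro h
    have hle : D ≤ᵐ[P] (fun _ => t) :=
      (prob_compl_eq_zero_iff (measurableSet_le hm measurable_const)).2 h
    exact hnc t ((integral_eq_iff_of_ae_le hi (integrable_const t) hle).1 (ht.symm.trans hc.symm))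

/-- Uniqueness in the bathtub principle, in the form needed to refute antimonotonicity: a variable
with the law of the indicator `X₀` of `{t < D}` that also attains `E[D X₀]` agrees with `X₀` a.s.,
and is therefore not antimonotone with `D`. -/
lemma not_antimonotone_of_law (P : Measure Ω) [IsProbabilityMeasure P] (D : Ω → ℝ)
    (hm : Measurable D) (hi : Integrable D P) (t : ℝ)
    (h0 : P {ω | D ω ≤ t} ≠ 0) (h1 : P {ω | D ω ≤ t} ≠ 1)
    (X : Ω → ℝ) (hX : Measurable X)
    (hlaw : SameLaw P X ({ω | t < D ω}.indicator (fun _ => (1 : ℝ))))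
    (hE : ∫ ω, D ω * X ω ∂P = ∫ ω, D ω * {ω | t < D ω}.indicator (fun _ => (1 : ℝ)) ω ∂P) :
    ¬ Antimonotone P X D := by
  set X₀ := {ω | t < D ω}.indicator (fun _ => (1 : ℝ)) with hX₀
  have hA : MeasurableSet {ω | t < D ω} := measurableSet_lt measurable_const hm
  have hX₀m : Measurable X₀ := measurable_const.indicator hA
  have hid : ProbabilityTheory.IdentDistrib X X₀ P P := ⟨hX.aemeasurable, hX₀m.aemeasurable, hlaw⟩
  have h01 : ∀ ω, X₀ ω ∈ Set.Icc (0 : ℝ) 1 := by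
    intro ω
    by_cases h : t < D ω <;> simp [hX₀, h]
  have hX01 : ∀ᵐ ω ∂P, X ω ∈ Set.Icc (0 : ℝ) 1 :=
    hid.symm.ae_mem_snd measurableSet_Icc (Filter.Eventually.of_forall h01)
  have hX₀i : Integrable X₀ P := (integrable_const (1 : ℝ)).indicator hA
  have hXi : Integrable X P := hid.integrable_iff.2 hX₀i
  have hDX : Integrable (fun ω => D ω * X ω) P := by
    refine hi.mul_bdd (c := 1) hX.aestronglyMeasurable ?_
    filter_upwards [hX01] with ω hω
    rw [Real.norm_eq_abs, abs_le]
    constructor <;> linarith [hω.1, hω.2]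
  have hDX₀ : Integrable (fun ω => D ω * X₀ ω) P := by
    refine hi.mul_bdd (c := 1) hX₀m.aestronglyMeasurable (Filter.Eventually.of_forall fun ω => ?_)
    rw [Real.norm_eq_abs, abs_le]
    constructor <;> linarith [(h01 ω).1, (h01 ω).2]
  have hEX : ∫ ω, X ω ∂P = ∫ ω, X₀ ω ∂P := hid.integral_eq
  -- `(D - t) (X₀ - X)` is nonnegative with zero mean, hence vanishes a.s.
  have hle : (fun ω => D ω * X ω - t * X ω) ≤ᵐ[P] fun ω => D ω * X₀ ω - t * X₀ ω := by
    filter_upwards [hX01] with ω hω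
    by_cases h : t < D ω
    · have : X₀ ω = 1 := by simp [hX₀, h]
      rw [this]
      nlinarith [hω.2]
    · have : X₀ ω = 0 := by simp [hX₀, h]
      rw [this]
      nlinarith [hω.1]
  have heq := (integral_eq_iff_of_ae_le (hDX.sub (hXi.const_mul t))
    (hDX₀.sub (hX₀i.const_mul t)) hle).1 (by
      rw [integral_sub' hDX (hXi.const_mul t), integral_sub' hDX₀ (hX₀i.const_mul t),
        integral_const_mul, integral_const_mul, hE, hEX])
  -- On `{D > t}` this gives `X = 1`; the equality of means then settles the level set `{D = t}`.
  have hge : X₀ ≤ᵐ[P] X := by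
    filter_upwards [heq, hX01] with ω hω h2
    by_cases h : t < D ω
    · have h3 : X₀ ω = 1 := by simp [hX₀, h]
      have h4 : D ω * X ω - t * X ω = D ω * X₀ ω - t * X₀ ω := hω
      rw [h3] at h4 ⊢
      have : (D ω - t) * (X ω - 1) = 0 := by linarith
      rcases mul_eq_zero.1 this with h5 | h5 <;> linarith
    · have h3 : X₀ ω = 0 := by simp [hX₀, h]
      rw [h3]
      exact h2.1
  have hXX : X₀ =ᵐ[P] X := (integral_eq_iff_of_ae_le hX₀i hXi hge).1 hEX.symm
  have hiff : ∀ ω, X₀ ω ≤ 0 ↔ D ω ≤ t := by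
    intro ω
    by_cases h : t < D ω
    · have : X₀ ω = 1 := by simp [hX₀, h]
      rw [this]
      constructor <;> intro h2 <;> linarith
    · have : X₀ ω = 0 := by simp [hX₀, h]
      rw [this]
      exact ⟨fun _ => not_lt.1 h, fun _ => le_rfl⟩
  have hs : {ω | X ω ≤ 0} =ᵐ[P] {ω | D ω ≤ t} := by
    rw [Filter.eventuallyEq_set]
    filter_upwards [hXX] with ω hω
    rw [← hω, hiff]
  intro hanti
  have key := hanti 0 t
  have hinter : P ({ω | X ω ≤ 0} ∩ {ω | D ω ≤ t}) = P {ω | D ω ≤ t} := by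
    rw [measure_congr (hs.inter (Filter.EventuallyEq.refl _ {ω | D ω ≤ t})), Set.inter_self]
  rw [hinter, measure_congr hs] at key
  set b := P {ω | D ω ≤ t}
  -- `b = max (2 b - 1) 0` forces `b = 0` or `b = 1`.
  have hb : b ≠ ⊤ := measure_ne_top _ _
  rcases le_total (b + b) 1 with h | h
  · rw [tsub_eq_zero_of_le h] at key
    exact h0 key
  · have h2 : b + 1 = b + b := by
      conv_lhs => rw [key]
      exact tsub_add_cancel_of_le h
    exact h1 ((ENNReal.add_right_inj hb).1 h2).symm

/-- sharpness of the assumptions: for every nonconstant pricing density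
`D` with `E[D] > 0` there are feasible quadruples witnessing that none of the
assumptions of the antimonotone-solution theorem can be dropped. -/
theorem sharpness_optimisation
    (P : Measure Ω) [IsProbabilityMeasure P] (hP : IsAtomless P)
    (pr : PairedSpaces P) (D : Ω → ℝ) (hD : D ∈ pr.dual)
    (hDnc : Nonconstant P D) (hED : 0 < ∫ ω, D ω ∂P) :
    (∃ φ : (Ω → ℝ) → EReal, ∃ C : Set (Ω → ℝ), ∃ p : ℝ,
      LawInvariantFn P pr.carrier φ ∧ C ⊆ pr.carrier ∧ LawInvariantSet P C ∧
      (∃ X, IsOptimal P φ C D p X) ∧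
      WeaklyIncreasingFn pr.carrier φ ∧
      (∀ X, IsOptimal P φ C D p X → ¬ Antimonotone P X D)) ∧
    (∃ φ : (Ω → ℝ) → EReal, ∃ C : Set (Ω → ℝ), ∃ p : ℝ,
      LawInvariantFn P pr.carrier φ ∧ C ⊆ pr.carrier ∧ LawInvariantSet P C ∧
      (∃ X, IsOptimal P φ C D p X) ∧
      IncreasingSet C ∧
      (∀ X, IsOptimal P φ C D p X → ¬ Antimonotone P X D)) ∧
    (∃ φ : (Ω → ℝ) → EReal, ∃ C : Set (Ω → ℝ), ∃ p : ℝ,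
      LawInvariantFn P pr.carrier φ ∧ C ⊆ pr.carrier ∧ LawInvariantSet P C ∧
      (∃ X, IsOptimal P φ C D p X) ∧
      IncreasingFn pr.carrier φ ∧
      (∃ X, IsOptimal P φ C D p X ∧ φ X ≠ (⊤ : EReal) ∧ φ X ≠ (⊥ : EReal)) ∧
      (∃ X, IsOptimal P φ C D p X ∧ ¬ Antimonotone P X D)) ∧
    (∃ φ : (Ω → ℝ) → EReal, ∃ C : Set (Ω → ℝ), ∃ p : ℝ,
      LawInvariantFn P pr.carrier φ ∧ C ⊆ pr.carrier ∧ LawInvariantSet P C ∧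
      (∃ X, IsOptimal P φ C D p X) ∧
      IncreasingSet C ∧
      (∃ X, IsOptimal P φ C D p X ∧ φ X ≠ (⊤ : EReal) ∧ φ X ≠ (⊥ : EReal)) ∧
      (∃ X, IsOptimal P φ C D p X ∧ ¬ Antimonotone P X D)) := by
  classical
  have hm := pr.meas_dual D hD
  have hi := pr.int_dual D hD
  obtain ⟨h0, h1⟩ := level_pos P D hm hi hDnc
  set t := ∫ ω, D ω ∂P
  have key := not_antimonotone_of_law P D hm hi t h0 h1
  set X₀ := {ω | t < D ω}.indicator (fun _ => (1 : ℝ)) with hX₀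
  have hX₀m : Measurable X₀ := measurable_const.indicator (measurableSet_lt measurable_const hm)
  have hX₀c : X₀ ∈ pr.carrier := by
    refine pr.linf_carrier _ ⟨hX₀m, 1, Filter.Eventually.of_forall fun ω => ?_⟩
    by_cases h : t < D ω <;> simp [hX₀, h]
  -- the law class of `X₀`, and its `0`-`1` indicator
  let K : Set (Ω → ℝ) := {X | Measurable X ∧ SameLaw P X X₀}
  let ψ : (Ω → ℝ) → EReal := fun X => if SameLaw P X X₀ then 1 else 0
  have hKc : K ⊆ pr.carrier := fun X hX => pr.lawinv_carrier X₀ hX₀c X hX.1 hX.2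
  have hKl : LawInvariantSet P K := fun X hX Y hY hYX => ⟨hY, Eq.trans hYX hX.2⟩
  have hKmean : ∀ X ∈ K, ∫ ω, X ω ∂P = ∫ ω, X₀ ω ∂P := fun X hX =>
    (⟨hX.1.aemeasurable, hX₀m.aemeasurable, hX.2⟩ :
      ProbabilityTheory.IdentDistrib X X₀ P P).integral_eq
  have hK0 : X₀ ∈ K := ⟨hX₀m, rfl⟩
  have hψ0 : ψ X₀ = 1 := if_pos rfl
  have hψl : LawInvariantFn P pr.carrier ψ := by
    intro X _ Y _ h
    have : SameLaw P X X₀ ↔ SameLaw P Y X₀ := by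
      unfold SameLaw at h ⊢
      rw [h]
    simp only [ψ, this]
  have hcl : LawInvariantSet P pr.carrier := fun X hX Y hY h => pr.lawinv_carrier X hX Y hY h
  have hci : IncreasingSet pr.carrier := fun X hX m _ =>
    pr.add_carrier X hX _ (pr.linf_carrier (fun _ => m)
      ⟨measurable_const, |m|, Filter.Eventually.of_forall fun _ => le_rfl⟩)
  have hψo : IsOptimal P ψ pr.carrier D (∫ ω, D ω * X₀ ω ∂P) X₀ := by
    refine ⟨hX₀c, rfl, fun X' _ _ => ?_⟩
    rw [hψ0]
    simp only [ψ]
    split_ifs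
    · exact le_rfl
    · exact zero_le_one
  have hψt : ψ X₀ ≠ ⊤ ∧ ψ X₀ ≠ ⊥ := by
    rw [hψ0]
    exact ⟨EReal.coe_ne_top 1, EReal.coe_ne_bot 1⟩
  have hEo : IsOptimal P (fun X => ((∫ ω, X ω ∂P : ℝ) : EReal)) K D (∫ ω, D ω * X₀ ω ∂P) X₀ :=
    ⟨hK0, rfl, fun X' hX' _ => by simp only [hKmean X' hX', le_refl]⟩
  have hna := key X₀ hX₀m rfl rfl
  refine ⟨⟨fun _ => 0, K, ∫ ω, D ω * X₀ ω ∂P, fun _ _ _ _ _ => rfl, hKc, hKl,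
      ⟨X₀, hK0, rfl, fun _ _ _ => le_rfl⟩, fun _ _ _ _ => le_rfl,
      fun X hX => key X hX.1.1 hX.1.2 hX.2.1⟩,
    ⟨ψ, pr.carrier, ∫ ω, D ω * X₀ ω ∂P, hψl, subset_rfl, hcl, ⟨X₀, hψo⟩, hci, fun X hX => ?_⟩,
    ⟨fun X => ((∫ ω, X ω ∂P : ℝ) : EReal), K, ∫ ω, D ω * X₀ ω ∂P, fun X hX Y hY h => ?_, hKc,
      hKl, ⟨X₀, hEo⟩, fun X hX _ m hmpos => ?_,
      ⟨X₀, hEo, EReal.coe_ne_top _, EReal.coe_ne_bot _⟩, ⟨X₀, hEo, hna⟩⟩,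
    ⟨ψ, pr.carrier, ∫ ω, D ω * X₀ ω ∂P, hψl, subset_rfl, hcl, ⟨X₀, hψo⟩, hci,
      ⟨X₀, hψo, hψt⟩, ⟨X₀, hψo, hna⟩⟩⟩
  · -- an optimal solution does at least as well as `X₀`, so it has the law of `X₀`
    refine key X (pr.meas_carrier X hX.1) ?_ hX.2.1
    by_contra hn
    have h2 := hX.2.2 X₀ hX₀c rfl
    rw [hψ0] at h2
    simp only [ψ, if_neg hn] at h2
    exact absurd h2 (not_le.2 zero_lt_one)
  · have : ∫ ω, X ω ∂P = ∫ ω, Y ω ∂P :=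
      (⟨(pr.meas_carrier X hX).aemeasurable, (pr.meas_carrier Y hY).aemeasurable, h⟩ :
        ProbabilityTheory.IdentDistrib X Y P P).integral_eq
    simp only [this]
  · have : ∫ ω, (X ω + m) ∂P = ∫ ω, X ω ∂P + m := by
      rw [integral_add (pr.int_carrier X hX) (integrable_const m)]
      simp
    simp only [this]
    exact EReal.coe_lt_coe_iff.2 (by linarith)

end Collapse
end
end
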